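/- Let X be a class of primitive finite soluble groups (closed under isomorphism) which is chief factor closed, dual closed and subtensor closed. Let F be the class of all finite soluble groups all of whose chief factors are X-central. Then F is a saturated formation and F = pdef(X), the class of all finite soluble groups every primitive quotient of which lies in X. -/

import Mathlib

/-!
Write `pdef X` for `PdefClass X` and `F` for `FClass X`. The heart of the matter is `F = pdef X`;
that `F` is a formation holds for any `X`, and that `pdef X` is saturated holds for any `X`, so the
equality gives a saturated formation.

*`F ⊆ pdef X`.* The socle `K` of a primitive finite soluble group `H` avoids some maximal subgroup
(`exists_coatom_of_primitive`), so `H` is the split extension of `K` by `H / C_H(K)`. If `H` is a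
quotient of a group in `F`, then `K` is `X`-central and this split extension, that is `H`, is in
`X`.

*`pdef X ⊆ F`.* By induction on the order only a minimal normal subgroup `A` of `G ∈ pdef X` has
to be treated, and all chief factors above `A` may be assumed `X`-central. If `A` avoids a maximal
subgroup, the split extension of `A` by `G / C_G(A)` is a primitive quotient of `G`
(`exists_hom_splitExtension`) and lies in `X`. Suppose that `A` is a `p`-group contained in every
maximal subgroup.

* An element of `G` that acts trivially on all `p`-chief factors above `A` acts trivially on `A`
  (`IsChiefFactorMap.act_trivial_of_frattini`). Let `R` be the group of these elements. By
  transfer, the elements of `R` of order prime to `p` modulo `A` form a normal subgroup `T` of `G`.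
  By Schur–Zassenhaus `A` has a complement in `T`, which is normal in `G` because `A` is contained
  in all maximal subgroups; so `T` centralizes `A`. Thus `R` acts on `A` as a `p`-group, and a
  normal `p`-group of operators of an irreducible module in characteristic `p` is trivial.
* Hence, by the theorem of Burnside and Steinberg, `A` is a composition factor of a direct sum of
  tensor products of `p`-chief factors above `A`. It is proved through matrix coefficients: those of
  the modules whose composition factors are `X`-central form an algebra of functions on the finite
  set `G`, and by a finite Stone–Weierstrass theorem such an algebra contains every function
  constant on the classes of points it does not separate, in particular the matrix coefficients of
  `A` (`xc_of_faithful`).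
* Subtensor closure says that the composition factors of a tensor product of two irreducible
  `X`-central modules are `X`-central (`allXC_tprod_of_irreducible`). By dévissage, the modules all
  of whose composition factors are `X`-central are closed under tensor products (`AllXC.tprod`), so
  `A` is `X`-central.

*Formation and saturation.* A chief factor `A/B` of `G` with `A ∩ N ≤ B` is isomorphic to the chief
factor `AN/BN` above `N`, and a chief factor above `N ∩ M` is isomorphic to one above `N` or to one
above `M`; so `F` is a formation. A normal subgroup contained in all maximal subgroups is mapped to
the trivial group by every primitive quotient, since the socle of the latter is complemented; so
`pdef X` is saturated.
-/

open Function TensorProduct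

/-- `A` is a minimal normal subgroup of `G`. -/
def IsMinimalNormalSubgroup (G : Type) [Group G] (A : Subgroup G) : Prop :=
  A.Normal ∧ A ≠ ⊥ ∧ ∀ N : Subgroup G, N.Normal → N ≤ A → N = ⊥ ∨ N = A

/-- `A/B` is a chief factor of `G`: `B ≤ A` are normal subgroups of `G` and `A/B` is a minimal
normal subgroup of `G/B`. -/
def IsChiefFactor (G : Type) [Group G] (A B : Subgroup G) : Prop :=
  A.Normal ∧ B.Normal ∧ B < A ∧
    ∀ N : Subgroup G, N.Normal → B ≤ N → N ≤ A → N = B ∨ N = A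

/-- A primitive group: a group with a minimal normal subgroup equal to its own centralizer. -/
def IsPrimitiveGroup (G : Type) [Group G] : Prop :=
  ∃ K : Subgroup G, IsMinimalNormalSubgroup G K ∧ Subgroup.centralizer (K : Set G) = K

/-- A bundled group. -/
structure GrpB where
  carrier : Type
  [str : Group carrier]

attribute [instance] GrpB.str

instance : CoeSort GrpB Type := ⟨GrpB.carrier⟩

/-- A bundled representation of `G` over `ZMod p`. -/
structure RepB (p : ℕ) (G : Type) [Group G] where
  V : Type
  [instAdd : AddCommGroup V]
  [instMod : Module (ZMod p) V]
  ρ : Representation (ZMod p) G V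

attribute [instance] RepB.instAdd RepB.instMod

/-- A representation is irreducible if the module is nonzero and has no nontrivial proper
invariant submodule. -/
def IsIrreducibleRep {p : ℕ} {G V : Type} [Group G]
    [AddCommGroup V] [Module (ZMod p) V] (ρ : Representation (ZMod p) G V) : Prop :=
  Nontrivial V ∧
    ∀ S : Submodule (ZMod p) V, (∀ (g : G), ∀ v ∈ S, ρ g v ∈ S) → S = ⊥ ∨ S = ⊤

/-- `φ : A → V` realizes the representation `ρ` on `V` as the chief factor module `[A/B]`. -/
def IsChiefFactorMap (p : ℕ) {G : Type} [Group G] (A B : Subgroup G) {V : Type}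
    [AddCommGroup V] [Module (ZMod p) V] (ρ : Representation (ZMod p) G V) (φ : A → V) : Prop :=
  IsChiefFactor G A B ∧
    (∀ a b : A, φ (a * b) = φ a + φ b) ∧
    Function.Surjective φ ∧
    (∀ a : A, φ a = 0 ↔ (a : G) ∈ B) ∧
    (∀ (g : G) (a a' : A), (a' : G) = g * (a : G) * g⁻¹ → φ a' = ρ g (φ a))

/-- `ρV` is (isomorphic to) a composition factor of the representation `ρX`. -/
def IsCompositionFactorOf {p : ℕ} {G V X : Type} [Group G]
    [AddCommGroup V] [Module (ZMod p) V] [AddCommGroup X] [Module (ZMod p) X]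
    (ρV : Representation (ZMod p) G V) (ρX : Representation (ZMod p) G X) : Prop :=
  IsIrreducibleRep ρV ∧
    ∃ T S : Submodule (ZMod p) X,
      (∀ (g : G), ∀ x ∈ T, ρX g x ∈ T) ∧
      (∀ (g : G), ∀ x ∈ S, ρX g x ∈ S) ∧
      S ≤ T ∧
      ∃ ψ : T →ₗ[ZMod p] V, Function.Surjective ψ ∧
        (∀ t : T, ψ t = 0 ↔ (t : X) ∈ S) ∧
        (∀ (g : G) (t t' : T), (t' : X) = ρX g (t : X) → ψ t' = ρV g (ψ t))

/-- `H` is the split extension of the module `V` (with `G` acting via `ρ`) by `G/C_G(V)`: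
`H = V ⋊ (G / C_G(V))`, encoded by an embedding `j` of the additive group of `V` as a
complemented normal subgroup and a homomorphism `π : G → H` with kernel the centralizer of `V`
inducing the action `ρ` by conjugation. -/
def IsSplitModuleExtension {p : ℕ} {G V : Type} [Group G]
    [AddCommGroup V] [Module (ZMod p) V] (ρ : Representation (ZMod p) G V)
    (H : Type) [Group H] : Prop :=
  ∃ (j : V → H) (π : G →* H),
    (∀ v w : V, j (v + w) = j v * j w) ∧
    (∀ v : V, j v = 1 ↔ v = 0) ∧
    (∀ (g : G) (v : V), j (ρ g v) = π g * j v * (π g)⁻¹) ∧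
    (∀ g : G, π g = 1 ↔ ∀ v : V, ρ g v = v) ∧
    (∀ h : H, ∃ (v : V) (g : G), h = j v * π g) ∧
    (∀ (v : V) (g : G), j v * π g = 1 → j v = 1 ∧ π g = 1)

/-- The chief factor `A/B` of `G` is `X`-central: the split extension of `[A/B]` by
`G/C_G(A/B)` belongs to `X`. -/
def IsXCentral (X : GrpB → Prop) (G : Type) [Group G] (A B : Subgroup G) : Prop :=
  IsChiefFactor G A B ∧
    ∃ p : ℕ, p.Prime ∧
      ∃ (M : RepB p G) (φ : A → M.V), IsChiefFactorMap p A B M.ρ φ ∧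
        ∃ H : GrpB, X H ∧ IsSplitModuleExtension M.ρ H.carrier

/-- `X` is closed under isomorphisms. -/
def IsoClosed (X : GrpB → Prop) : Prop :=
  ∀ P Q : GrpB, X P → Nonempty (P.carrier ≃* Q.carrier) → X Q

/-- `X` consists of primitive finite soluble groups. -/
def IsPrimitiveClass (X : GrpB → Prop) : Prop :=
  ∀ P : GrpB, X P → Finite P.carrier ∧ IsSolvable P.carrier ∧ IsPrimitiveGroup P.carrier

/-- `X` is chief factor closed: for `P ∈ X` and every chief factor `A/B` of `P`, the split
extension of `A/B` by `P/C_P(A/B)` is in `X`. -/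
def ChiefFactorClosed (X : GrpB → Prop) : Prop :=
  ∀ P : GrpB, X P → ∀ A B : Subgroup P.carrier, IsChiefFactor P.carrier A B →
    IsXCentral X P.carrier A B

/-- `X` is primitive quotient closed: every primitive quotient of a member of `X` is in `X`. -/
def PrimitiveQuotientClosed (X : GrpB → Prop) : Prop :=
  ∀ P : GrpB, X P → ∀ (H : GrpB) (π : P.carrier →* H.carrier), Function.Surjective π →
    IsPrimitiveGroup H.carrier → X H

/-- `H` is the split extension of the dual module `Hom(A, 𝔽_p)` of the elementary abelian
`p`-group `A = Soc P` by `P/A`: encoded by a normal complemented subgroup `M` of `H`, a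
homomorphism `π : P → H` with kernel `A`, and a perfect equivariant pairing `β` exhibiting `M`
as the dual of `A`. -/
def IsDualSplitExtension (p : ℕ) {P : Type} [Group P] (A : Subgroup P)
    (H : Type) [Group H] : Prop :=
  ∃ (M : Subgroup H) (π : P →* H) (β : M → A → ZMod p),
    M.Normal ∧
    (∀ x : P, π x = 1 ↔ x ∈ A) ∧
    (∀ (m m' : M) (a : A), β (m * m') a = β m a + β m' a) ∧
    (∀ (m : M) (a a' : A), β m (a * a') = β m a + β m a') ∧
    (∀ m : M, (∀ a : A, β m a = 0) → m = 1) ∧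
    (∀ f : A → ZMod p, (∀ a b : A, f (a * b) = f a + f b) →
      ∃ m : M, ∀ a : A, β m a = f a) ∧
    (∀ (x : P) (m m' : M) (a a' : A),
      (m' : H) = π x * (m : H) * (π x)⁻¹ → (a' : P) = x * (a : P) * x⁻¹ → β m' a' = β m a) ∧
    (∀ h : H, ∃ (m : M) (x : P), h = (m : H) * π x) ∧
    (∀ (m : M) (x : P), (m : H) * π x = 1 → (m : H) = 1 ∧ π x = 1)

/-- `X` is dual closed: for every `P ∈ X` with socle `A`, the split extension of the dual
module `Hom(A, 𝔽_p)` by `P/A` is in `X`. -/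
def DualClosed (X : GrpB → Prop) : Prop :=
  ∀ P : GrpB, X P → ∀ (p : ℕ), p.Prime →
    ∀ A : Subgroup P.carrier, IsMinimalNormalSubgroup P.carrier A →
      (∃ n : ℕ, Nat.card A = p ^ n) →
      ∀ H : GrpB, IsDualSplitExtension p A H.carrier → X H

/-- `X` is subtensor closed: for `P, Q ∈ X` with socles `A, B` (elementary abelian for the same
prime `p`), `L` a subdirect sum of `P/A` and `Q/B` (encoded as a subgroup of `P × Q` containing
`A × B` and projecting onto both factors), and `C` a composition factor of the `𝔽_p L`-module
`A ⊗ B`, every primitive split extension of `C` by `L/C_L(C)` is in `X`. -/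
def SubtensorClosed (X : GrpB → Prop) : Prop :=
  ∀ P Q : GrpB, X P → X Q → ∀ (p : ℕ), p.Prime →
    ∀ (A : Subgroup P.carrier) (B : Subgroup Q.carrier),
      IsMinimalNormalSubgroup P.carrier A → IsMinimalNormalSubgroup Q.carrier B →
      ∀ (MA : RepB p P.carrier) (φA : A → MA.V), IsChiefFactorMap p A ⊥ MA.ρ φA →
      ∀ (MB : RepB p Q.carrier) (φB : B → MB.V), IsChiefFactorMap p B ⊥ MB.ρ φB →
      ∀ L : Subgroup (P.carrier × Q.carrier),
        A.prod B ≤ L →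
        Subgroup.map (MonoidHom.fst P.carrier Q.carrier) L = ⊤ →
        Subgroup.map (MonoidHom.snd P.carrier Q.carrier) L = ⊤ →
        ∀ C : RepB p L,
          IsCompositionFactorOf C.ρ
            ((Representation.tprod
              (MA.ρ.comp (MonoidHom.fst P.carrier Q.carrier))
              (MB.ρ.comp (MonoidHom.snd P.carrier Q.carrier))).comp L.subtype) →
          ∀ H : GrpB, IsSplitModuleExtension C.ρ H.carrier → IsPrimitiveGroup H.carrier →
            X H

/-- The class of groups `G` such that `G/N ∈ C`, expressed via surjective homomorphisms with
kernel `N`. -/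
def QuotientIn (C : GrpB → Prop) (G : GrpB) (N : Subgroup G.carrier) : Prop :=
  ∃ (H : GrpB) (π : G.carrier →* H.carrier), Function.Surjective π ∧ π.ker = N ∧ C H

/-- `C` is a formation (of finite soluble groups): it is closed under quotients, and
`G/(N ⊓ M) ∈ C` whenever `G/N ∈ C` and `G/M ∈ C`. -/
def IsFormation (C : GrpB → Prop) : Prop :=
  (∀ G : GrpB, Finite G.carrier → IsSolvable G.carrier → C G →
    ∀ (H : GrpB) (π : G.carrier →* H.carrier), Function.Surjective π → C H) ∧
  (∀ G : GrpB, Finite G.carrier → IsSolvable G.carrier →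
    ∀ N M : Subgroup G.carrier, N.Normal → M.Normal →
      QuotientIn C G N → QuotientIn C G M → QuotientIn C G (N ⊓ M))

/-- `C` is saturated: `G ∈ C` whenever `G` has a normal subgroup `A` contained in the Frattini
subgroup `Φ(G)` (the intersection of all maximal subgroups) with `G/A ∈ C`. -/
def IsSaturated (C : GrpB → Prop) : Prop :=
  ∀ G : GrpB, Finite G.carrier → IsSolvable G.carrier →
    ∀ A : Subgroup G.carrier, A.Normal →
      (∀ x ∈ A, ∀ M : Subgroup G.carrier, IsCoatom M → x ∈ M) →
      QuotientIn C G A → C G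

/-- A saturated formation. -/
def IsSaturatedFormation (C : GrpB → Prop) : Prop :=
  IsFormation C ∧ IsSaturated C

/-- The class of all finite soluble groups all of whose chief factors are `X`-central. -/
def FClass (X : GrpB → Prop) (G : GrpB) : Prop :=
  Finite G.carrier ∧ IsSolvable G.carrier ∧
    ∀ A B : Subgroup G.carrier, IsChiefFactor G.carrier A B → IsXCentral X G.carrier A B

/-- `pdef X`: the class of all finite soluble groups every primitive quotient of which lies
in `X`. -/
def PdefClass (X : GrpB → Prop) (G : GrpB) : Prop :=
  Finite G.carrier ∧ IsSolvable G.carrier ∧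
    ∀ (H : GrpB) (π : G.carrier →* H.carrier), Function.Surjective π →
      IsPrimitiveGroup H.carrier → X H

open scoped commutatorElement

/-! ### Correspondences between groups -/

section Relations

/-- A multiplicative relation that is total and functional is the graph of a homomorphism. -/
theorem exists_hom_of_rel {G H : Type*} [MulOneClass G] [MulOneClass H] (r : G → H → Prop)
    (htot : ∀ g, ∃ h, r g h) (hfun : ∀ g h h', r g h → r g h' → h = h') (hone : r 1 1)
    (hmul : ∀ g g' h h', r g h → r g' h' → r (g * g') (h * h')) :
    ∃ f : G →* H, ∀ g h, r g h → f g = h := by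
  choose f hf using htot
  exact ⟨⟨⟨f, hfun _ _ _ (hf 1) hone⟩,
    fun a b => hfun _ _ _ (hf _) (hmul _ _ _ _ (hf a) (hf b))⟩,
    fun g h hr => hfun _ _ _ (hf g) hr⟩

/-- Descent of a representation along a multiplicative correspondence between two groups. -/
theorem exists_rep_of_rel {p : ℕ} {G L V : Type} [Group G] [Group L] [AddCommGroup V]
    [Module (ZMod p) V] (ρ : Representation (ZMod p) G V) (r : L → G → Prop)
    (htot : ∀ l, ∃ g, r l g) (hone : r 1 1)
    (hmul : ∀ l l' g g', r l g → r l' g' → r (l * l') (g * g'))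
    (hwd : ∀ l g g', r l g → r l g' → ρ g = ρ g') :
    ∃ ρ' : Representation (ZMod p) L V, ∀ l g, r l g → ρ' l = ρ g := by
  obtain ⟨f, hf⟩ := exists_hom_of_rel (fun l (e : V →ₗ[ZMod p] V) => ∃ g, r l g ∧ ρ g = e)
    (fun l => (htot l).elim fun g hg => ⟨_, g, hg, rfl⟩)
    (by rintro l _ _ ⟨g, hg, rfl⟩ ⟨g', hg', rfl⟩; exact hwd l g g' hg hg')
    ⟨1, hone, map_one ρ⟩
    (by rintro l l' _ _ ⟨g, hg, rfl⟩ ⟨g', hg', rfl⟩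
        exact ⟨g * g', hmul _ _ _ _ hg hg', map_mul ρ g g'⟩)
  exact ⟨f, fun l g h => hf l _ ⟨g, h, rfl⟩⟩

end Relations

/-! ### Split extensions of modules -/

section SplitExtensions

variable {p : ℕ} {G V W : Type} [Group G] [AddCommGroup V] [Module (ZMod p) V]
  [AddCommGroup W] [Module (ZMod p) W]

/-- `V` is `X`-central as a `G`-module: its split extension by `G / C_G(V)` lies in `X`. -/
def XC (X : GrpB → Prop) (ρ : Representation (ZMod p) G V) : Prop :=
  ∃ H : GrpB, X H ∧ IsSplitModuleExtension ρ H.carrier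

/-- The split extension exists: it is the group of affine maps `x ↦ ρ g x + w` of `V`. -/
theorem exists_splitExtension (ρ : Representation (ZMod p) G V) :
    ∃ H : GrpB, IsSplitModuleExtension ρ H.carrier := by
  let S : Subgroup (Equiv.Perm V) :=
    { carrier := {σ | ∃ (g : G) (w : V), ∀ v, σ v = ρ g v + w}
      mul_mem' := by
        rintro σ τ ⟨g, w, h⟩ ⟨g', w', h'⟩
        exact ⟨g * g', ρ g w' + w, fun v => by simp [h, h', add_assoc]⟩
      one_mem' := ⟨1, 0, fun v => by simp⟩
      inv_mem' := by
        rintro σ ⟨g, w, h⟩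
        refine ⟨g⁻¹, - ρ g⁻¹ w, fun v => ?_⟩
        rw [Equiv.Perm.inv_eq_iff_eq, h]
        simp }
  let π : G →* S := MonoidHom.mk'
    (fun g => ⟨⟨ρ g, ρ g⁻¹, fun x => by simp, fun x => by simp⟩, g, 0, fun v => by simp⟩)
    (fun a b => by ext x; simp)
  have hπ : ∀ g x, (π g : Equiv.Perm V) x = ρ g x := fun g x => rfl
  let j : V → S := fun w => ⟨Equiv.addRight w, 1, w, fun v => by simp⟩
  have hj : ∀ w x, (j w : Equiv.Perm V) x = x + w := fun g x => rfl
  have ext' : ∀ a b : S, (∀ x, (a : Equiv.Perm V) x = (b : Equiv.Perm V) x) → a = b :=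
    fun a b h => Subtype.ext (Equiv.ext h)
  refine ⟨⟨S⟩, j, π, ?_, ?_, ?_, ?_, ?_, ?_⟩
  · intro v w
    apply ext'; intro x
    simp [hj, add_assoc, add_comm w v]
  · intro v
    constructor
    · intro h
      have := hj v 0
      rw [h] at this
      simpa using this.symm
    · rintro rfl
      apply ext'; intro x; simp [hj]
  · intro g v
    rw [eq_mul_inv_iff_mul_eq]
    apply ext'; intro x
    simp [hj, hπ]
  · intro g
    constructor
    · intro h v
      rw [← hπ, h]; rfl
    · intro h
      apply ext'; intro x; rw [hπ, h]; rfl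
  · rintro ⟨σ, g, w, h⟩
    exact ⟨w, g, ext' _ _ fun x => by simp [hj, hπ, h]⟩
  · intro v g h
    have h0 : v = 0 := by
      have : (j v * π g : S).1 0 = 0 := by rw [h]; rfl
      simpa [hj, hπ] using this
    have h1 : j v = 1 := by
      subst h0; apply ext'; intro x; simp [hj]
    exact ⟨h1, by simpa [h1] using h⟩

/-- Being a split extension only depends on the isomorphism type of the module, even along a
change of groups with the same image in the automorphisms of the module. -/
theorem IsSplitModuleExtension.transfer {L : Type} [Group L]
    {ρ : Representation (ZMod p) G V} {ρ' : Representation (ZMod p) L W} (e : V ≃+ W)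
    (r : L → G → Prop) (hr : ∀ l, ∃ g, r l g) (hr' : ∀ g, ∃ l, r l g)
    (he : ∀ l g, r l g → ∀ v, e (ρ g v) = ρ' l (e v))
    {H : Type} [Group H] (hH : IsSplitModuleExtension ρ H) : IsSplitModuleExtension ρ' H := by
  obtain ⟨j, π, hadd, h0, hact, hker, hsurj, hsplit⟩ := hH
  have hker2 : ∀ g g', π g = π g' ↔ ∀ v, ρ g v = ρ g' v := by
    intro g g'
    rw [← inv_mul_eq_one, ← map_inv, ← map_mul, hker]
    refine forall_congr' fun v => ?_
    rw [map_mul, Module.End.mul_apply, Representation.inv_apply_eq_iff, eq_comm]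
  obtain ⟨f, hf⟩ := exists_hom_of_rel (fun l h => ∃ g, (∀ v, e (ρ g v) = ρ' l (e v)) ∧ h = π g)
    (fun l => (hr l).elim fun g hg => ⟨_, g, he l g hg, rfl⟩)
    (by rintro l _ _ ⟨g, hg, rfl⟩ ⟨g', hg', rfl⟩
        rw [hker2]; intro v; apply e.injective; rw [hg, hg'])
    ⟨1, by simp, by simp⟩
    (by rintro l l' _ _ ⟨g, hg, rfl⟩ ⟨g', hg', rfl⟩
        exact ⟨g * g', by simp [hg, hg'], by simp⟩)
  refine ⟨fun w => j (e.symm w), f, ?_, ?_, ?_, ?_, ?_, ?_⟩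
  · simp [hadd]
  · simp [h0]
  · intro l w
    obtain ⟨g, hg⟩ := hr l
    rw [hf l _ ⟨g, he l g hg, rfl⟩, ← hact]
    refine congrArg j ?_
    rw [AddEquiv.symm_apply_eq, he l g hg, e.apply_symm_apply]
  · intro l
    obtain ⟨g, hg⟩ := hr l
    rw [hf l _ ⟨g, he l g hg, rfl⟩, hker]
    constructor
    · intro h w
      have := he l g hg (e.symm w)
      rw [h] at this
      simpa using this.symm
    · intro h v
      apply e.injective
      rw [he l g hg, h]
  · intro h
    obtain ⟨v, g, rfl⟩ := hsurj h
    obtain ⟨l, hl⟩ := hr' g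
    exact ⟨e v, l, by simp [hf l _ ⟨g, he l g hl, rfl⟩]⟩
  · intro w l
    obtain ⟨g, hg⟩ := hr l
    rw [hf l _ ⟨g, he l g hg, rfl⟩]
    exact hsplit _ _

/-- `X`-centrality of a module only depends on its group of operators: `r` relates elements of the
two groups that act in the same way. -/
theorem XC.transfer {X : GrpB → Prop} {L : Type} [Group L]
    {ρ : Representation (ZMod p) G V} {ρ' : Representation (ZMod p) L W} (h : XC X ρ) (e : V ≃+ W)
    (r : L → G → Prop) (hr : ∀ l, ∃ g, r l g) (hr' : ∀ g, ∃ l, r l g)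
    (he : ∀ l g, r l g → ∀ v, e (ρ g v) = ρ' l (e v)) : XC X ρ' := by
  obtain ⟨H, hX, hH⟩ := h
  exact ⟨H, hX, hH.transfer e r hr hr' he⟩

/-- The socle of the split extension of a faithful irreducible module is that module: it is a
minimal normal subgroup equal to its centralizer, hence the only minimal normal subgroup. -/
theorem splitExtension_socle {ρ : Representation (ZMod p) G V} (hirr : IsIrreducibleRep ρ)
    {H : Type} [Group H] {j : V → H} {π : G →* H}
    (hadd : ∀ v w : V, j (v + w) = j v * j w)
    (h0 : ∀ v : V, j v = 1 ↔ v = 0)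
    (hact : ∀ (g : G) (v : V), j (ρ g v) = π g * j v * (π g)⁻¹)
    (hker : ∀ g : G, π g = 1 ↔ ∀ v : V, ρ g v = v)
    (hsurj : ∀ h : H, ∃ (v : V) (g : G), h = j v * π g) :
    ∃ K : Subgroup H, (∀ h, h ∈ K ↔ ∃ v, j v = h) ∧ IsMinimalNormalSubgroup H K ∧
      Subgroup.centralizer (K : Set H) = K := by
  have hneg : ∀ v, j (-v) = (j v)⁻¹ := fun v => by
      rw [eq_inv_iff_mul_eq_one, ← hadd, neg_add_cancel, h0]
  have hinj : Injective j := fun v w h => by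
    rw [← sub_eq_zero, ← h0, sub_eq_add_neg, hadd, hneg, h, mul_inv_cancel]
  have hcomm : ∀ v w, j v * j w * (j v)⁻¹ = j w := fun v w => by
    rw [← hneg, ← hadd, ← hadd]; congr 1; abel
  have hconj : ∀ v g w, (j v * π g) * j w * (j v * π g)⁻¹ = j (ρ g w) := fun v g w => by
    rw [mul_inv_rev]
    calc _ = j v * (π g * j w * (π g)⁻¹) * (j v)⁻¹ := by group
      _ = _ := by rw [← hact, hcomm]
  let K : Subgroup H :=
    { carrier := Set.range j
      mul_mem' := by rintro _ _ ⟨v, rfl⟩ ⟨w, rfl⟩; exact ⟨v + w, hadd v w⟩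
      one_mem' := ⟨0, (h0 0).2 rfl⟩
      inv_mem' := by rintro _ ⟨v, rfl⟩; exact ⟨-v, hneg v⟩ }
  have hK : ∀ h, h ∈ K ↔ ∃ v, j v = h := fun h => Iff.rfl
  refine ⟨K, hK, ⟨⟨?_⟩, ?_, ?_⟩, ?_⟩
  · rintro _ ⟨w, rfl⟩ h
    obtain ⟨v, g, rfl⟩ := hsurj h
    exact ⟨_, (hconj v g w).symm⟩
  · obtain ⟨v, hv⟩ := @exists_ne V hirr.1 0
    intro h
    apply hv
    rw [← h0, ← Subgroup.mem_bot, ← h]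
    exact ⟨v, rfl⟩
  · intro N hN hNK
    let S : AddSubgroup V :=
      { carrier := {v | j v ∈ N}
        add_mem' := fun {a b} ha hb => by
          change j (a + b) ∈ N
          rw [hadd]
          exact N.mul_mem ha hb
        zero_mem' := by
          change j 0 ∈ N
          rw [(h0 0).2 rfl]
          exact N.one_mem
        neg_mem' := fun {a} ha => by
          change j (-a) ∈ N
          rw [hneg]
          exact N.inv_mem ha }
    have hS : ∀ v, v ∈ AddSubgroup.toZModSubmodule p S ↔ j v ∈ N := fun v => Iff.rfl
    rcases hirr.2 (AddSubgroup.toZModSubmodule p S) (fun g v hv => by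
      rw [hS] at *; rw [hact]; exact hN.conj_mem _ hv _) with h | h
    · left
      rw [eq_bot_iff]
      intro x hx
      obtain ⟨v, rfl⟩ := hNK hx
      have : v = 0 := by rw [← Submodule.mem_bot (ZMod p), ← h, hS]; exact hx
      rw [Subgroup.mem_bot, h0, this]
    · right
      apply le_antisymm hNK
      rintro _ ⟨v, rfl⟩
      rw [← hS, h]; trivial
  · ext h
    rw [Subgroup.mem_centralizer_iff, hK]
    constructor
    · intro hh
      obtain ⟨v, g, rfl⟩ := hsurj h
      have : π g = 1 := by
        rw [hker]
        intro w
        apply hinj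
        rw [← hconj v g w, ← hh (j w) ⟨w, rfl⟩]
        group
      exact ⟨v, by rw [this, mul_one]⟩
    · rintro ⟨v, rfl⟩ _ ⟨w, rfl⟩
      rw [← hadd, ← hadd, add_comm]

theorem splitExtension_primitive {ρ : Representation (ZMod p) G V} (hirr : IsIrreducibleRep ρ)
    {H : Type} [Group H] (hH : IsSplitModuleExtension ρ H) : IsPrimitiveGroup H := by
  obtain ⟨j, π, hadd, h0, hact, hker, hsurj, hsplit⟩ := hH
  obtain ⟨K, -, h⟩ := splitExtension_socle hirr hadd h0 hact hker hsurj
  exact ⟨K, h⟩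

end SplitExtensions

/-! ### Chief factors as modules -/

section ChiefFactors

variable {p : ℕ} {G V : Type} [Group G] [AddCommGroup V] [Module (ZMod p) V]

/-- A chief factor of a finite soluble group is elementary abelian. -/
theorem IsChiefFactor.elementary [Finite G] [Group.IsSolvable G] {A B : Subgroup G}
    (h : IsChiefFactor G A B) :
    (∀ a ∈ A, ∀ b ∈ A, ⁅a, b⁆ ∈ B) ∧ ∃ q : ℕ, q.Prime ∧ ∀ a ∈ A, a ^ q ∈ B := by
  obtain ⟨hA, hB, hlt, hmin⟩ := h
  let f := QuotientGroup.mk' B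
  have hf : ∀ x, f x = 1 ↔ x ∈ B := fun x => QuotientGroup.eq_one_iff x
  have hfs : Surjective f := QuotientGroup.mk'_surjective B
  have hA1 : (A.map f) ≠ ⊥ := by
    rw [Ne, Subgroup.map_eq_bot_iff, QuotientGroup.ker_mk']
    exact not_le_of_gt hlt
  have hcomm : ∀ a ∈ A, ∀ b ∈ A, ⁅a, b⁆ ∈ B := by
    have h1 := Group.IsSolvable.commutator_lt_of_ne_bot hA1
    have : (A.map f).Normal := hA.map f hfs
    have hn : (⁅A.map f, A.map f⁆.comap f).Normal := inferInstance
    have hle : ⁅A.map f, A.map f⁆.comap f ≤ A := by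
      intro x hx
      obtain ⟨a, ha, hax⟩ := h1.le hx
      have : a⁻¹ * x ∈ B := by rw [← hf]; simp [hax]
      simpa using A.mul_mem ha (hlt.le this)
    have hBle : B ≤ ⁅A.map f, A.map f⁆.comap f := by
      intro x hx
      rw [Subgroup.mem_comap, (hf x).2 hx]
      exact one_mem _
    rcases hmin _ hn hBle hle with h2 | h2
    · intro a ha b hb
      rw [← h2, Subgroup.mem_comap, map_commutatorElement]
      exact Subgroup.commutator_mem_commutator ⟨a, ha, rfl⟩ ⟨b, hb, rfl⟩
    · exfalso
      apply h1.ne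
      conv_rhs => rw [← h2]
      rw [Subgroup.map_comap_eq_self_of_surjective hfs]
  refine ⟨hcomm, ?_⟩
  obtain ⟨a, ha, haB⟩ := SetLike.exists_of_lt hlt
  have hn1 : orderOf (f a) ≠ 1 := by rw [Ne, orderOf_eq_one_iff, hf]; exact haB
  obtain ⟨q, hq, hdvd⟩ := Nat.exists_prime_and_dvd hn1
  refine ⟨q, hq, ?_⟩
  have hmulpow : ∀ a ∈ A, ∀ b ∈ A, f ((a * b) ^ q) = f (a ^ q) * f (b ^ q) := by
    intro a ha b hb
    have : Commute (f a) (f b) := by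
      rw [← commutatorElement_eq_one_iff_commute, ← map_commutatorElement, hf]
      exact hcomm a ha b hb
    rw [map_pow, map_mul, this.mul_pow, map_pow, map_pow]
  let N : Subgroup G :=
    { carrier := {a | a ∈ A ∧ a ^ q ∈ B}
      mul_mem' := by
        rintro a b ⟨ha, ha'⟩ ⟨hb, hb'⟩
        refine ⟨A.mul_mem ha hb, ?_⟩
        rw [← hf, hmulpow a ha b hb, (hf _).2 ha', (hf _).2 hb', one_mul]
      one_mem' := ⟨A.one_mem, by rw [one_pow]; exact B.one_mem⟩
      inv_mem' := by
        rintro a ⟨ha, ha'⟩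
        exact ⟨A.inv_mem ha, by rw [inv_pow]; exact B.inv_mem ha'⟩ }
  have hN : ∀ a, a ∈ N ↔ a ∈ A ∧ a ^ q ∈ B := fun a => Iff.rfl
  have hNn : N.Normal := ⟨fun a ha g => ⟨hA.conj_mem _ ha.1 _, by
    rw [conj_pow]; exact hB.conj_mem _ ha.2 _⟩⟩
  rcases hmin N hNn (fun b hb => ⟨hlt.le hb, B.pow_mem hb q⟩) (fun x hx => hx.1) with h | h
  · exfalso
    have : a ^ (orderOf (f a) / q) ∈ N := by
      refine ⟨A.pow_mem ha _, ?_⟩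
      rw [← hf, ← pow_mul, Nat.div_mul_cancel hdvd, map_pow, pow_orderOf_eq_one]
    rw [h, ← hf, map_pow] at this
    have h2 := Nat.le_of_dvd (Nat.div_pos (Nat.le_of_dvd (orderOf_pos _) hdvd) hq.pos)
      (orderOf_dvd_of_pow_eq_one this)
    exact absurd h2 (not_le_of_gt (Nat.div_lt_self (orderOf_pos _) hq.one_lt))
  · intro a ha
    rw [← h] at ha
    exact ha.2

/-- An action by additive maps on an abelian group of exponent `q` is a representation. -/
theorem exists_rep_of_action {q : ℕ} {Q : Type} [AddCommGroup Q] [Module (ZMod q) Q]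
    (c : G → Q →+ Q) (h1 : ∀ x, c 1 x = x) (hmul : ∀ g g' x, c (g * g') x = c g (c g' x)) :
    ∃ ρ : Representation (ZMod q) G Q, ∀ g v, ρ g v = c g v :=
  ⟨{ toFun := fun g => (c g).toZModLinearMap q
     map_one' := LinearMap.ext h1
     map_mul' := fun g g' => LinearMap.ext (hmul g g') }, fun _ _ => rfl⟩

/-- The multiplicative form of `exists_rep_of_action`; the module is `Additive Q`. -/
theorem exists_repB_of_action {q : ℕ} {Q : Type} [CommGroup Q] (hpow : ∀ x : Q, x ^ q = 1)
    (c : G → Q →* Q) (h1 : ∀ x, c 1 x = x) (hmul : ∀ g g' x, c (g * g') x = c g (c g' x)) :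
    ∃ (M : RepB q G) (e : Multiplicative M.V ≃* Q),
      ∀ g v, e (Multiplicative.ofAdd (M.ρ g v)) = c g (e (Multiplicative.ofAdd v)) := by
  let _ : Module (ZMod q) (Additive Q) := AddCommGroup.zmodModule (fun x => hpow x.toMul)
  obtain ⟨ρ, hρ⟩ := exists_rep_of_action (q := q) (fun g => MonoidHom.toAdditive (c g)) h1 hmul
  exact ⟨⟨Additive Q, ρ⟩, MulEquiv.refl Q, hρ⟩

/-- A chief factor of a finite soluble group is realized by a module over `ZMod p` for a prime `p`,
namely `Additive (A ⧸ B)` with the conjugation action. -/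
theorem exists_chiefFactorMap [Finite G] [Group.IsSolvable G] {A B : Subgroup G}
    (h : IsChiefFactor G A B) :
    ∃ (p : ℕ), p.Prime ∧ ∃ (M : RepB p G) (φ : A → M.V), IsChiefFactorMap p A B M.ρ φ := by
  obtain ⟨hcomm, q, hq, hpow⟩ := h.elementary
  have hA := h.1
  have hB := h.2.1
  have : (B.subgroupOf A).Normal := inferInstance
  let Q := A ⧸ B.subgroupOf A
  have hf : ∀ x : A, (x : Q) = 1 ↔ (x : G) ∈ B := fun x => by
    rw [QuotientGroup.eq_one_iff, Subgroup.mem_subgroupOf]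
  let i1 : CommGroup Q :=
    { (inferInstance : Group Q) with
      mul_comm := by
        intro x y
        induction x using QuotientGroup.induction_on with | _ a
        induction y using QuotientGroup.induction_on with | _ b
        rw [← commutatorElement_eq_one_iff_mul_comm]
        exact (hf ⁅a, b⁆).2 (hcomm a a.2 b b.2) }
  have hpw : ∀ x : Q, x ^ q = 1 := by
    intro x
    induction x using QuotientGroup.induction_on with | _ a
    exact (hf (a ^ q)).2 (hpow a a.2)
  let c : G → (Q →* Q) := fun g => QuotientGroup.map _ _ (MulAut.conjNormal g : A ≃* A).toMonoidHom
    (by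
      intro a ha
      rw [Subgroup.mem_subgroupOf] at ha
      simp only [Subgroup.mem_comap, Subgroup.mem_subgroupOf]
      exact hB.conj_mem _ ha g)
  have hc : ∀ g (a : A), c g (a : Q) = ((MulAut.conjNormal g a : A) : Q) := fun g a => rfl
  obtain ⟨M, e, he⟩ := exists_repB_of_action hpw c
    (fun x => by
      induction x using QuotientGroup.induction_on with | _ a
      rw [hc]; simp)
    (fun g g' x => by
      induction x using QuotientGroup.induction_on with | _ a
      rw [hc, hc, hc]; simp)
  refine ⟨q, hq, M, fun a => (e.symm (a : Q)).toAdd, h, ?_, ?_, ?_, ?_⟩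
  · intro a b
    exact congrArg Multiplicative.toAdd (map_mul e.symm (a : Q) (b : Q))
  · intro x
    obtain ⟨y, hy⟩ : ∃ y, e.symm y = Multiplicative.ofAdd x := e.symm.surjective _
    induction y using QuotientGroup.induction_on with | _ a
    exact ⟨a, congrArg Multiplicative.toAdd hy⟩
  · intro a
    rw [← hf]
    exact (map_eq_one_iff e.symm e.symm.injective : e.symm (a : Q) = 1 ↔ _)
  · intro g a a' haa
    change e.symm (a' : Q) = Multiplicative.ofAdd (M.ρ g (e.symm (a : Q)).toAdd)
    rw [MulEquiv.symm_apply_eq, he, ofAdd_toAdd, MulEquiv.apply_symm_apply, hc]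
    congr 1
    exact Subtype.ext haa

/-- The homomorphism underlying a chief factor map. -/
theorem IsChiefFactorMap.exists_hom {A B : Subgroup G} {ρ : Representation (ZMod p) G V}
    {φ : A → V} (h : IsChiefFactorMap p A B ρ φ) :
    ∃ f : A →* Multiplicative V, ∀ a, f a = Multiplicative.ofAdd (φ a) :=
  ⟨MonoidHom.mk' (fun a => Multiplicative.ofAdd (φ a)) fun a b => by rw [h.2.1]; rfl,
    fun _ => rfl⟩

theorem IsChiefFactorMap.map_eq_iff {A B : Subgroup G} {ρ : Representation (ZMod p) G V}
    {φ : A → V} (h : IsChiefFactorMap p A B ρ φ) (a b : A) :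
    φ a = φ b ↔ (a : G)⁻¹ * b ∈ B := by
  obtain ⟨f, hf⟩ := h.exists_hom
  have h1 : φ a = φ b ↔ φ (a⁻¹ * b) = 0 := by
    have := map_mul f a⁻¹ b
    rw [map_inv, hf, hf, hf] at this
    have h2 : φ (a⁻¹ * b) = -φ a + φ b := this
    rw [h2, neg_add_eq_zero]
  rw [h1, h.2.2.2.1]; rfl

theorem IsChiefFactorMap.irreducible {A B : Subgroup G} {ρ : Representation (ZMod p) G V}
    {φ : A → V} (h : IsChiefFactorMap p A B ρ φ) : IsIrreducibleRep ρ := by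
  obtain ⟨f, hf⟩ := h.exists_hom
  obtain ⟨⟨hA, hB, hlt, hmin⟩, hadd, hsurj, hker, hact⟩ := h
  have hf1 : ∀ a : A, f a = 1 ↔ φ a = 0 := fun a => by rw [hf]; rfl
  constructor
  · obtain ⟨a, ha, haB⟩ := SetLike.exists_of_lt hlt
    exact ⟨φ ⟨a, ha⟩, 0, by rw [Ne, hker]; exact haB⟩
  · intro S hS
    let N : Subgroup G := ((AddSubgroup.toSubgroup S.toAddSubgroup).comap f).map A.subtype
    have hN : ∀ x, x ∈ N ↔ ∃ hx : x ∈ A, φ ⟨x, hx⟩ ∈ S := by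
      intro x
      constructor
      · rintro ⟨a, ha, rfl⟩
        refine ⟨a.2, ?_⟩
        have h1 : f a ∈ AddSubgroup.toSubgroup S.toAddSubgroup := ha
        rw [hf] at h1; exact h1
      · rintro ⟨hx, hxS⟩
        refine ⟨⟨x, hx⟩, ?_, rfl⟩
        change f ⟨x, hx⟩ ∈ AddSubgroup.toSubgroup S.toAddSubgroup
        rw [hf]; exact hxS
    have hNn : N.Normal := by
      refine ⟨fun x hx g => ?_⟩
      rw [hN] at *
      obtain ⟨hx, hxS⟩ := hx
      refine ⟨hA.conj_mem _ hx g, ?_⟩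
      rw [hact g ⟨x, hx⟩ _ rfl]
      exact hS g _ hxS
    rcases hmin N hNn
      (fun b hb => (hN b).2 ⟨hlt.le hb, by rw [(hker ⟨b, _⟩).2 hb]; exact S.zero_mem⟩)
      (fun x hx => ((hN x).1 hx).1) with h | h
    · left
      rw [eq_bot_iff]
      intro v hv
      obtain ⟨a, rfl⟩ := hsurj v
      have : (a : G) ∈ N := (hN a).2 ⟨a.2, hv⟩
      rw [h] at this
      rw [Submodule.mem_bot, hker]; exact this
    · right
      rw [eq_top_iff]
      intro v _
      obtain ⟨a, rfl⟩ := hsurj v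
      have : (a : G) ∈ N := by rw [h]; exact a.2
      exact ((hN a).1 this).2

theorem IsChiefFactorMap.pow_mem {A B : Subgroup G} {ρ : Representation (ZMod p) G V}
    {φ : A → V} (h : IsChiefFactorMap p A B ρ φ) (a : G) (ha : a ∈ A) : a ^ p ∈ B := by
  obtain ⟨f, hf⟩ := h.exists_hom
  have h1 : φ (⟨a, ha⟩ ^ p) = 0 := by
    have := map_pow f ⟨a, ha⟩ p
    rw [hf, hf] at this
    have h2 : φ (⟨a, ha⟩ ^ p) = p • φ ⟨a, ha⟩ := this
    rw [h2, ← Nat.cast_smul_eq_nsmul (ZMod p)]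
    simp
  rw [h.2.2.2.1] at h1
  exact h1

/-- The prime of a chief factor map is determined by the chief factor. -/
theorem prime_eq_of_pow_mem {A B : Subgroup G} (hlt : B < A) {p q : ℕ} (hp : p.Prime)
    (hq : q.Prime) (h : ∀ a ∈ A, a ^ p ∈ B) (h' : ∀ a ∈ A, a ^ q ∈ B) : p = q := by
  by_contra hne
  have hco : Nat.Coprime p q := (Nat.coprime_primes hp hq).2 hne
  obtain ⟨a, ha, haB⟩ := SetLike.exists_of_lt hlt
  apply haB
  have h1 : (Nat.gcd p q : ℤ) = p * Nat.gcdA p q + q * Nat.gcdB p q := Nat.gcd_eq_gcd_ab p q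
  rw [hco] at h1
  have : a ^ (1 : ℤ) ∈ B := by
    rw [← Nat.cast_one, h1, zpow_add, zpow_mul, zpow_mul]
    exact B.mul_mem (B.zpow_mem (by simpa using h a ha) _) (B.zpow_mem (by simpa using h' a ha) _)
  simpa using this

/-- `X`-centrality may be tested on any module realizing the chief factor, as all of these are
isomorphic. -/
theorem IsXCentral.xc {X : GrpB → Prop} {A B : Subgroup G} {ρ : Representation (ZMod p) G V}
    (hp : p.Prime) {φ : A → V} (hX : IsXCentral X G A B) (h : IsChiefFactorMap p A B ρ φ) :
    XC X ρ := by
  obtain ⟨hchief, q, hq, M, ψ, hM, H, hH, hH'⟩ := hX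
  obtain rfl : q = p := prime_eq_of_pow_mem hchief.2.2.1 hq hp hM.pow_mem h.pow_mem
  have hxc : XC X M.ρ := ⟨H, hH, hH'⟩
  obtain ⟨e, he⟩ := exists_hom_of_rel
    (fun (x : Multiplicative M.V) (y : Multiplicative V) => ∃ a, ψ a = x.toAdd ∧ φ a = y.toAdd)
    (fun x => (hM.2.2.1 x.toAdd).elim fun a ha => ⟨Multiplicative.ofAdd (φ a), a, ha, rfl⟩)
    (by rintro x y y' ⟨a, ha, hy⟩ ⟨b, hb, hy'⟩
        apply Multiplicative.toAdd.injective
        rw [← hy, ← hy', h.map_eq_iff, ← hM.map_eq_iff, ha, hb])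
    ⟨1, (hM.2.2.2.1 1).2 (one_mem _), (h.2.2.2.1 1).2 (one_mem _)⟩
    (by rintro x x' y y' ⟨a, ha, hy⟩ ⟨b, hb, hy'⟩
        exact ⟨a * b, by rw [hM.2.1, ha, hb]; rfl, by rw [h.2.1, hy, hy']; rfl⟩)
  have he' : ∀ a, e (Multiplicative.ofAdd (ψ a)) = Multiplicative.ofAdd (φ a) := fun a =>
    he _ _ ⟨a, rfl, rfl⟩
  have hinj : Injective e := by
    rw [injective_iff_map_eq_one]
    intro x hx
    obtain ⟨a, ha⟩ := hM.2.2.1 x.toAdd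
    obtain rfl : Multiplicative.ofAdd (ψ a) = x := ha
    rw [he', ofAdd_eq_one, h.2.2.2.1] at hx
    rw [ofAdd_eq_one, hM.2.2.2.1]; exact hx
  have hsurj : Surjective e := by
    intro y
    obtain ⟨a, ha⟩ := h.2.2.1 y.toAdd
    exact ⟨_, (he' a).trans ha⟩
  obtain ⟨E, hE⟩ : ∃ E : M.V ≃+ V, ∀ a, E (ψ a) = φ a :=
    ⟨MulEquiv.toAdditive (MulEquiv.ofBijective e ⟨hinj, hsurj⟩), he'⟩
  refine hxc.transfer E (fun l g => l = g) (fun l => ⟨l, rfl⟩) (fun l => ⟨l, rfl⟩) ?_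
  rintro g _ rfl v
  obtain ⟨a, rfl⟩ := hM.2.2.1 v
  have hn := hchief.1.conj_mem a a.2 g
  change E (M.ρ g (ψ a)) = ρ g (E (ψ a))
  rw [← hM.2.2.2.2 g a ⟨_, hn⟩ rfl, hE, hE, h.2.2.2.2 g a ⟨_, hn⟩ rfl]

theorem isXCentral_of_xc {X : GrpB → Prop} {A B : Subgroup G} (hp : p.Prime) {M : RepB p G}
    {φ : A → M.V} (h : IsChiefFactorMap p A B M.ρ φ) (hx : XC X M.ρ) : IsXCentral X G A B :=
  ⟨h.1, p, hp, M, φ, h, hx⟩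

/-! ### Passage to quotients -/

variable {G₁ : Type} [Group G₁]

theorem isChiefFactor_comap {f : G →* G₁} (hf : Surjective f) {A B : Subgroup G₁} :
    IsChiefFactor G (A.comap f) (B.comap f) ↔ IsChiefFactor G₁ A B := by
  constructor
  · rintro ⟨hA, hB, hlt, hmin⟩
    refine ⟨?_, ?_, ?_, ?_⟩
    · rw [← Subgroup.map_comap_eq_self_of_surjective hf A]; exact hA.map f hf
    · rw [← Subgroup.map_comap_eq_self_of_surjective hf B]; exact hB.map f hf
    · exact (Subgroup.comap_lt_comap_of_surjective hf).1 hlt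
    · intro N hN h1 h2
      rcases hmin (N.comap f) (hN.comap f) (Subgroup.comap_mono h1) (Subgroup.comap_mono h2) with
        h | h
      · left; exact Subgroup.comap_injective hf h
      · right; exact Subgroup.comap_injective hf h
  · rintro ⟨hA, hB, hlt, hmin⟩
    refine ⟨hA.comap f, hB.comap f, (Subgroup.comap_lt_comap_of_surjective hf).2 hlt, ?_⟩
    intro N hN h1 h2
    have hk : f.ker ≤ N := le_trans (Subgroup.ker_le_comap f B) h1
    have hN' : (N.map f).comap f = N := by rw [Subgroup.comap_map_eq, sup_eq_left.2 hk]
    rcases hmin (N.map f) (hN.map f hf) (by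
        rw [← Subgroup.map_comap_eq_self_of_surjective hf B]; exact Subgroup.map_mono h1)
        (Subgroup.map_le_iff_le_comap.2 h2) with h | h
    · left; rw [← hN', h]
    · right; rw [← hN', h]

theorem IsChiefFactorMap.comap {f : G →* G₁} (hf : Surjective f) {A B : Subgroup G₁}
    {ρ : Representation (ZMod p) G₁ V} {φ : A → V} (h : IsChiefFactorMap p A B ρ φ) :
    IsChiefFactorMap p (A.comap f) (B.comap f) (ρ.comp f) (fun a : A.comap f => φ ⟨f (a : G), a.2⟩) := by
  obtain ⟨hc, hadd, hsurj, hker, hact⟩ := h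
  refine ⟨(isChiefFactor_comap hf).2 hc, ?_, ?_, ?_, ?_⟩
  · intro a b
    rw [← hadd]
    exact congrArg φ (Subtype.ext (map_mul f (a : G) (b : G)))
  · intro v
    obtain ⟨⟨a, ha⟩, rfl⟩ := hsurj v
    obtain ⟨x, rfl⟩ := hf a
    exact ⟨⟨x, ha⟩, rfl⟩
  · rintro ⟨a, ha⟩
    exact hker ⟨f a, ha⟩
  · intro g a a' haa
    exact hact (f g) _ _ (by simp [haa])

theorem isXCentral_comap {X : GrpB → Prop} [Finite G₁] [Group.IsSolvable G₁] {f : G →* G₁}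
    (hf : Surjective f) {A B : Subgroup G₁} :
    IsXCentral X G (A.comap f) (B.comap f) ↔ IsXCentral X G₁ A B := by
  have hr : ∀ g₁, ∃ g, f g = g₁ := hf
  constructor
  · intro h
    obtain ⟨p, hp, M, φ, hφ⟩ := exists_chiefFactorMap ((isChiefFactor_comap hf).1 h.1)
    refine isXCentral_of_xc hp hφ ?_
    refine (h.xc hp (hφ.comap hf)).transfer (AddEquiv.refl _) (fun g₁ g => f g = g₁) hr
      (fun g => ⟨_, rfl⟩) ?_
    rintro _ g rfl v; rfl
  · rintro ⟨hc, p, hp, M, φ, hφ, hx⟩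
    refine ⟨(isChiefFactor_comap hf).2 hc, p, hp, ⟨M.V, M.ρ.comp f⟩, _, hφ.comap hf, ?_⟩
    refine XC.transfer (G := G₁) hx (AddEquiv.refl _) (fun g g₁ => f g = g₁) (fun g => ⟨_, rfl⟩)
      hr ?_
    rintro g _ rfl v; rfl

/-- A quotient of `G` is in `F` if and only if the chief factors of `G` above the kernel are
`X`-central. -/
theorem fClass_iff_of_surjective {X : GrpB → Prop} {G : GrpB} [Finite G.carrier]
    [Group.IsSolvable G.carrier] {H : GrpB} (f : G.carrier →* H.carrier) (hf : Surjective f) :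
    FClass X H ↔ ∀ A B : Subgroup G.carrier, IsChiefFactor G.carrier A B → f.ker ≤ B →
      IsXCentral X G.carrier A B := by
  have hfin : Finite H.carrier := Finite.of_surjective f hf
  have hsol : Group.IsSolvable H.carrier := Group.isSolvable_of_surjective hf
  constructor
  · rintro ⟨-, -, h⟩ A B hAB hk
    have hB : (B.map f).comap f = B := by rw [Subgroup.comap_map_eq, sup_eq_left.2 hk]
    have hA : (A.map f).comap f = A := by
      rw [Subgroup.comap_map_eq, sup_eq_left.2 (hk.trans hAB.2.2.1.le)]
    rw [← hA, ← hB] at hAB ⊢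
    exact (isXCentral_comap hf).2 (h _ _ ((isChiefFactor_comap hf).1 hAB))
  · intro h
    refine ⟨hfin, hsol, fun A B hAB => ?_⟩
    exact (isXCentral_comap hf).1
      (h _ _ ((isChiefFactor_comap hf).2 hAB) (Subgroup.ker_le_comap f B))

/-! ### Perspective chief factors -/

theorem IsChiefFactor.inf {A B C : Subgroup G} (h : IsChiefFactor G A B) (hC : C.Normal)
    (hAC : C ⊔ B = A) : IsChiefFactor G C (C ⊓ B) := by
  obtain ⟨hA, hB, hlt, hmin⟩ := h
  refine ⟨hC, inferInstance, ?_, ?_⟩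
  · refine lt_of_le_of_ne inf_le_left fun h => ?_
    rw [inf_eq_left] at h
    rw [sup_eq_right.2 h] at hAC
    exact hlt.ne hAC
  · intro N hN h1 h2
    have hle : N ⊔ B ≤ A := by rw [← hAC]; exact sup_le_sup_right h2 B
    rcases hmin (N ⊔ B) inferInstance le_sup_right hle with h | h
    · left
      exact le_antisymm (le_inf h2 (by rw [← h]; exact le_sup_left)) h1
    · right
      refine le_antisymm h2 fun x hx => ?_
      have hx2 : x ∈ N ⊔ B := by rw [h, ← hAC]; exact Subgroup.mem_sup_left hx
      rw [Subgroup.mem_sup_of_normal_left] at hx2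
      obtain ⟨n, hn, b, hb, rfl⟩ := hx2
      refine N.mul_mem hn (h1 ⟨?_, hb⟩)
      have := C.mul_mem (C.inv_mem (h2 hn)) hx
      simpa using this

theorem IsChiefFactor.of_inf {A B C : Subgroup G} (h : IsChiefFactor G C (C ⊓ B))
    (hB : B.Normal) (hAC : C ⊔ B = A) : IsChiefFactor G A B := by
  obtain ⟨hC, -, hlt, hmin⟩ := h
  subst hAC
  refine ⟨inferInstance, hB, ?_, ?_⟩
  · refine lt_of_le_of_ne le_sup_right fun h => hlt.ne ?_
    rw [inf_eq_left, h]; exact le_sup_left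
  · intro N hN h1 h2
    have key : N ≤ (C ⊓ N) ⊔ B := by
      intro x hx
      have hx2 := h2 hx
      rw [Subgroup.mem_sup_of_normal_left] at hx2
      obtain ⟨c, hc, b, hb, rfl⟩ := hx2
      refine Subgroup.mul_mem_sup ⟨hc, ?_⟩ hb
      have := N.mul_mem hx (N.inv_mem (h1 hb))
      simpa using this
    rcases hmin (C ⊓ N) inferInstance (inf_le_inf_left C h1) inf_le_left with h | h
    · left
      refine le_antisymm (key.trans ?_) h1
      rw [h]; exact sup_le inf_le_right le_rfl
    · right
      refine le_antisymm h2 (sup_le ?_ h1)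
      rw [← h]; exact inf_le_right

/-- The chief factors `CB/B` and `C/(C ∩ B)` are realized by the same module. -/
theorem IsChiefFactorMap.restrict {A B C : Subgroup G} {ρ : Representation (ZMod p) G V}
    {φ : A → V} (h : IsChiefFactorMap p A B ρ φ) (hC : C.Normal) (hAC : C ⊔ B = A) :
    IsChiefFactorMap p C (C ⊓ B) ρ
      (fun c => φ ⟨c, by rw [← hAC]; exact Subgroup.mem_sup_left c.2⟩) := by
  obtain ⟨hc, hadd, hsurj, hker, hact⟩ := h
  have hB := hc.2.1
  refine ⟨hc.inf hC hAC, ?_, ?_, ?_, ?_⟩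
  · intro a b; rw [← hadd]; rfl
  · intro v
    obtain ⟨⟨a, ha⟩, rfl⟩ := hsurj v
    have ha' := ha
    rw [← hAC, Subgroup.mem_sup_of_normal_left] at ha'
    obtain ⟨c, hc, b, hb, rfl⟩ := ha'
    refine ⟨⟨c, hc⟩, ?_⟩
    have hcA : c ∈ A := by rw [← hAC]; exact Subgroup.mem_sup_left hc
    have hbA : b ∈ A := by rw [← hAC]; exact Subgroup.mem_sup_right hb
    have h1 := hadd ⟨c, hcA⟩ ⟨b, hbA⟩
    rw [(hker ⟨b, hbA⟩).2 hb, add_zero] at h1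
    exact h1.symm
  · intro a
    rw [hker]
    exact ⟨fun h => ⟨a.2, h⟩, fun h => h.2⟩
  · intro g a a' haa
    exact hact g _ _ haa

/-- `CB/B` is `X`-central if and only if `C/(C ∩ B)` is. -/
theorem isXCentral_inf_iff {X : GrpB → Prop} [Finite G] [Group.IsSolvable G]
    {A B C : Subgroup G} (h : IsChiefFactor G A B) (hC : C.Normal) (hAC : C ⊔ B = A) :
    IsXCentral X G C (C ⊓ B) ↔ IsXCentral X G A B := by
  obtain ⟨p, hp, M, φ, hφ⟩ := exists_chiefFactorMap h
  have hr := hφ.restrict hC hAC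
  exact ⟨fun hx => isXCentral_of_xc hp hφ (hx.xc hp hr),
    fun hx => isXCentral_of_xc hp hr (hx.xc hp hφ)⟩

end ChiefFactors

/-! ### Complements of chief factors -/

section Complements

variable {p : ℕ} {G V : Type} [Group G] [AddCommGroup V] [Module (ZMod p) V]

/-- The chief factor map of a minimal normal subgroup `A` is injective. -/
theorem IsChiefFactorMap.injective {A : Subgroup G} {ρ : Representation (ZMod p) G V} {φ : A → V}
    (h : IsChiefFactorMap p A ⊥ ρ φ) : Injective φ := by
  intro a b hab
  rw [h.map_eq_iff, Subgroup.mem_bot, inv_mul_eq_one] at hab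
  exact Subtype.ext hab

theorem IsChiefFactorMap.comm {A : Subgroup G} {ρ : Representation (ZMod p) G V} {φ : A → V}
    (h : IsChiefFactorMap p A ⊥ ρ φ) {a b : G} (ha : a ∈ A) (hb : b ∈ A) : a * b = b * a := by
  have : (⟨a, ha⟩ * ⟨b, hb⟩ : A) = ⟨b, hb⟩ * ⟨a, ha⟩ :=
    h.injective (by rw [h.2.1, h.2.1, add_comm])
  exact congrArg Subtype.val this

theorem IsChiefFactorMap.act_trivial_iff {A : Subgroup G} {ρ : Representation (ZMod p) G V}
    {φ : A → V} (h : IsChiefFactorMap p A ⊥ ρ φ) (g : G) :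
    (∀ v, ρ g v = v) ↔ ∀ a ∈ A, g * a = a * g := by
  constructor
  · intro hv a ha
    have := h.2.2.2.2 g ⟨a, ha⟩ ⟨_, h.1.1.conj_mem a ha g⟩ rfl
    rw [hv] at this
    have := congrArg Subtype.val (h.injective this)
    exact mul_inv_eq_iff_eq_mul.1 this
  · intro hg v
    obtain ⟨⟨a, ha⟩, rfl⟩ := h.2.2.1 v
    exact (h.2.2.2.2 g ⟨a, ha⟩ ⟨a, ha⟩ (by simp [hg a ha])).symm

/-- If the minimal normal subgroup `A` is complemented by a maximal subgroup `M`, then the split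
extension of `A` by `G / C_G(A)` is the quotient of `G` by `M ∩ C_G(A)`. -/
theorem exists_hom_splitExtension {A M : Subgroup G} {ρ : Representation (ZMod p) G V} {φ : A → V}
    (h : IsChiefFactorMap p A ⊥ ρ φ) (hM : IsCoatom M) (hAM : ¬ A ≤ M) {H : Type} [Group H]
    (hH : IsSplitModuleExtension ρ H) :
    ∃ f : G →* H, Surjective f ∧ ∀ g, f g = 1 → g ∈ M ∧ ∀ a ∈ A, g * a = a * g := by
  have hA := h.1.1
  have hsup : A ⊔ M = ⊤ := hM.2 _ (right_lt_sup.2 hAM)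
  have hdec : ∀ g : G, ∃ a ∈ A, ∃ m ∈ M, a * m = g := fun g => by
    rw [← Subgroup.mem_sup_of_normal_left, hsup]; trivial
  have hn : (A ⊓ M).Normal := by
    refine ⟨fun x hx g => ?_⟩
    obtain ⟨a, ha, m, hm, rfl⟩ := hdec g
    have h1 : m * x * m⁻¹ ∈ A := hA.conj_mem x hx.1 m
    have h2 : a * m * x * (a * m)⁻¹ = m * x * m⁻¹ := by
      have := h.comm ha h1
      calc a * m * x * (a * m)⁻¹ = a * (m * x * m⁻¹) * a⁻¹ := by group
        _ = _ := by rw [this]; group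
    rw [h2]
    exact ⟨h1, M.mul_mem (M.mul_mem hm hx.2) (M.inv_mem hm)⟩
  have hbot : A ⊓ M = ⊥ := by
    rcases h.1.2.2.2 _ hn bot_le inf_le_left with h1 | h1
    · exact h1
    · exact absurd (inf_eq_left.1 h1) hAM
  have huniq : ∀ a ∈ A, ∀ a' ∈ A, ∀ m ∈ M, ∀ m' ∈ M, a * m = a' * m' → a = a' ∧ m = m' := by
    intro a ha a' ha' m hm m' hm' e
    have h1 : a'⁻¹ * a = m' * m⁻¹ := by
      rw [eq_mul_inv_iff_mul_eq, mul_assoc, e]; group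
    have h2 : a'⁻¹ * a ∈ A ⊓ M :=
      ⟨A.mul_mem (A.inv_mem ha') ha, by rw [h1]; exact M.mul_mem hm' (M.inv_mem hm)⟩
    rw [hbot, Subgroup.mem_bot, inv_mul_eq_one] at h2
    subst h2
    exact ⟨rfl, mul_left_cancel e⟩
  obtain ⟨j, π, hadd, h0, hact, hker, hsurj, hsplit⟩ := hH
  obtain ⟨f, hf⟩ := exists_hom_of_rel
    (fun g x => ∃ a : A, ∃ m ∈ M, g = a * m ∧ x = j (φ a) * π m)
    (fun g => by
      obtain ⟨a, ha, m, hm, rfl⟩ := hdec g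
      exact ⟨_, ⟨a, ha⟩, m, hm, rfl, rfl⟩)
    (by
      rintro _ _ _ ⟨a, m, hm, rfl, rfl⟩ ⟨a', m', hm', e, rfl⟩
      obtain ⟨h1, rfl⟩ := huniq a a.2 a' a'.2 m hm m' hm' e
      rw [Subtype.ext h1])
    ⟨1, 1, M.one_mem, by simp, by rw [(h.2.2.2.1 1).2 (one_mem _), (h0 0).2 rfl]; simp⟩
    (by
      rintro _ _ _ _ ⟨a, m, hm, rfl, rfl⟩ ⟨a', m', hm', rfl, rfl⟩
      refine ⟨a * ⟨m * a' * m⁻¹, hA.conj_mem a' a'.2 m⟩, m * m', M.mul_mem hm hm', ?_, ?_⟩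
      · simp [mul_assoc]
      · rw [h.2.1, h.2.2.2.2 m a' ⟨m * a' * m⁻¹, _⟩ rfl, hadd, hact, map_mul]; group)
  refine ⟨f, ?_, ?_⟩
  · intro x
    obtain ⟨v, g, rfl⟩ := hsurj x
    obtain ⟨a₀, rfl⟩ := h.2.2.1 v
    obtain ⟨a, ha, m, hm, rfl⟩ := hdec g
    refine ⟨a₀ * m, hf _ _ ⟨a₀, m, hm, rfl, ?_⟩⟩
    have : π a = 1 := by
      rw [hker, h.act_trivial_iff]
      exact fun b hb => h.comm ha hb
    rw [map_mul, this, one_mul]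
  · intro g hg
    obtain ⟨a, ha, m, hm, rfl⟩ := hdec g
    rw [hf _ _ ⟨⟨a, ha⟩, m, hm, rfl, rfl⟩] at hg
    obtain ⟨h1, h2⟩ := hsplit _ _ hg
    rw [h0, h.2.2.2.1, Subgroup.mem_bot] at h1
    change a = 1 at h1
    subst h1
    rw [hker, h.act_trivial_iff] at h2
    rw [one_mul]
    exact ⟨hm, h2⟩

/-- If `A` is a `p`-group contained in the normal subgroup `T` and `T/A` has order prime to `p`,
then `A` has a complement in `T` (Schur–Zassenhaus). -/
theorem exists_complement_of_coprime [Finite G] (hp : p.Prime) {A T : Subgroup G} (hA : A.Normal)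
    (hAT : A ≤ T) (hpow : ∀ a ∈ A, a ^ p = 1)
    (hT : ∀ x ∈ T, ∃ e : ℕ, e.Coprime p ∧ x ^ e ∈ A) :
    ∃ S : Subgroup G, S ⊓ A = ⊥ ∧ S ⊔ A = T ∧ (Nat.card S).Coprime p := by
  have hpf : Fact p.Prime := ⟨hp⟩
  let N := A.subgroupOf T
  have hNp : IsPGroup p N := fun x => ⟨1, by
    ext
    simpa using hpow x.1 x.2⟩
  have hidx : N.index.Coprime p := by
    rw [Nat.coprime_comm, Nat.Prime.coprime_iff_not_dvd hp]
    intro hd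
    obtain ⟨x, hx⟩ := exists_prime_orderOf_dvd_card' (G := T ⧸ N) p hd
    induction x using QuotientGroup.induction_on with | _ t
    obtain ⟨e, he, ht⟩ := hT t t.2
    have h1 : (t : T ⧸ N) ^ e = 1 := by
      rw [← QuotientGroup.mk_pow, QuotientGroup.eq_one_iff]; exact ht
    have h2 := orderOf_dvd_of_pow_eq_one h1
    rw [hx] at h2
    exact hp.one_lt.ne' (Nat.dvd_one.1 (he ▸ Nat.dvd_gcd h2 dvd_rfl))
  have hco : (Nat.card N).Coprime N.index := by
    obtain ⟨n, hn⟩ := IsPGroup.iff_card.1 hNp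
    rw [hn]
    exact (Nat.coprime_comm.1 hidx).pow_left n
  obtain ⟨S, hS⟩ := Subgroup.exists_right_complement'_of_coprime hco
  have hNA : N.map T.subtype = A := by
    rw [Subgroup.subgroupOf_map_subtype, inf_eq_left.2 hAT]
  refine ⟨S.map T.subtype, ?_, ?_, ?_⟩
  · rw [← hNA, ← Subgroup.map_inf _ _ _ T.subtype_injective, inf_comm, hS.disjoint.eq_bot,
      Subgroup.map_bot]
  · rw [← hNA, ← Subgroup.map_sup, sup_comm, hS.sup_eq_top, ← MonoidHom.range_eq_map,
      Subgroup.range_subtype]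
  · rw [Subgroup.card_map_of_injective T.subtype_injective, ← hS.symm.index_eq_card]
    exact hidx

/-- A complement of `A` in `T` as above is normal in `G` when `A` is contained in all maximal
subgroups: by an averaging argument all conjugates of the complement are conjugate under `A`, and
the Frattini argument applies. -/
theorem exists_normal_complement [Finite G] (hp : p.Prime) {A T : Subgroup G}
    {ρ : Representation (ZMod p) G V} {φ : A → V} (h : IsChiefFactorMap p A ⊥ ρ φ)
    (hFr : ∀ M : Subgroup G, IsCoatom M → A ≤ M) (hTn : T.Normal) (hAT : A ≤ T)
    (hT : ∀ x ∈ T, ∃ e : ℕ, e.Coprime p ∧ x ^ e ∈ A) :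
    ∃ S : Subgroup G, S.Normal ∧ S ⊓ A = ⊥ ∧ S ⊔ A = T := by
  have hA := h.1.1
  have hpf : Fact p.Prime := ⟨hp⟩
  obtain ⟨S, hSA, hST, hcard⟩ := exists_complement_of_coprime hp hA hAT
    (fun a ha => by simpa using h.pow_mem a ha) hT
  refine ⟨S, ?_, hSA, hST⟩
  have hST' : S ≤ T := by rw [← hST]; exact le_sup_left
  have key : ∀ g : G, ∃ α ∈ A, g⁻¹ * α ∈ Subgroup.normalizer (S : Set G) := by
    intro g
    -- the cocycle comparing `S` with `g S g⁻¹`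
    have hex : ∀ s : S, ∃ d : A, g⁻¹ * ((d : G) * s) * g ∈ S := by
      intro s
      have h1 : g⁻¹ * s * g ∈ A ⊔ S := by
        rw [sup_comm, hST]
        simpa using hTn.conj_mem _ (hST' s.2) g⁻¹
      rw [Subgroup.mem_sup_of_normal_left] at h1
      obtain ⟨a, ha, t, ht, hat⟩ := h1
      refine ⟨⟨g * a⁻¹ * g⁻¹, hA.conj_mem _ (A.inv_mem ha) g⟩, ?_⟩
      convert ht using 1
      rw [eq_comm, ← inv_mul_eq_iff_eq_mul.2 hat.symm]
      group
    choose d hd using hex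
    have huniq : ∀ (s : S) (a : A), g⁻¹ * ((a : G) * s) * g ∈ S → a = d s := by
      intro s a ha
      have h1 := S.mul_mem ha (S.inv_mem (hd s))
      have h2 : g⁻¹ * ((a : G) * s) * g * (g⁻¹ * ((d s : G) * s) * g)⁻¹ =
          g⁻¹ * ((a : G) * (d s : G)⁻¹) * g := by group
      rw [h2] at h1
      have h3 : g⁻¹ * ((a : G) * (d s : G)⁻¹) * g ∈ S ⊓ A := ⟨h1, by
        simpa using hA.conj_mem _ (A.mul_mem a.2 (A.inv_mem (d s).2)) g⁻¹⟩
      rw [hSA, Subgroup.mem_bot] at h3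
      have h4 : (a : G) * (d s : G)⁻¹ = 1 := by
        calc _ = g * (g⁻¹ * ((a : G) * (d s : G)⁻¹) * g) * g⁻¹ := by group
          _ = 1 := by rw [h3]; group
      exact Subtype.ext (mul_inv_eq_one.1 h4)
    have hcoc : ∀ s t : S, φ (d (s * t)) = φ (d s) + ρ s (φ (d t)) := by
      intro s t
      rw [← h.2.2.2.2 (s : G) (d t) ⟨_, hA.conj_mem _ (d t).2 s⟩ rfl, ← h.2.1]
      refine congrArg φ (huniq _ _ ?_).symm
      convert S.mul_mem (hd s) (hd t) using 1
      push_cast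
      group
    have : Fintype S := Fintype.ofFinite S
    have hm : ((Nat.card S : ℕ) : ZMod p) ≠ 0 := by
      rw [Ne, ZMod.natCast_eq_zero_iff, ← Nat.Prime.coprime_iff_not_dvd hp, Nat.coprime_comm]
      exact hcard
    let σ : V := ∑ t : S, φ (d t)
    have hσ : ∀ s : S, σ = (Nat.card S : ZMod p) • φ (d s) + ρ s σ := by
      intro s
      have h1 : σ = ∑ t : S, φ (d (s * t)) := (Equiv.sum_comp (Equiv.mulLeft s) _).symm
      refine h1.trans ?_
      simp only [hcoc, Finset.sum_add_distrib, ← map_sum]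
      simp [Nat.card_eq_fintype_card, Nat.cast_smul_eq_nsmul, σ]
    obtain ⟨α, hα⟩ := h.2.2.1 ((Nat.card S : ZMod p)⁻¹ • σ)
    have hd2 : ∀ s : S, φ (d s) = φ α - ρ s (φ α) := by
      intro s
      rw [hα, map_smul, ← smul_sub, eq_inv_smul_iff₀ hm, eq_sub_iff_add_eq]
      exact (hσ s).symm
    have hd3 : ∀ s : S, (d s : G) * s = α * s * (α : G)⁻¹ := by
      intro s
      have h1 : φ (d s * ⟨s * α * (s : G)⁻¹, hA.conj_mem _ α.2 s⟩) = φ α := by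
        rw [h.2.1, h.2.2.2.2 (s : G) α ⟨s * α * (s : G)⁻¹, _⟩ rfl, hd2]; abel
      have h2 := congrArg Subtype.val (h.injective h1)
      change (d s : G) * (s * α * (s : G)⁻¹) = α at h2
      rw [eq_mul_inv_iff_mul_eq]
      nth_rewrite 2 [← h2]
      group
    refine ⟨α, α.2, Subgroup.mem_normalizer_fintype ?_⟩
    intro s hs
    have h1 := hd ⟨s, hs⟩
    rw [hd3] at h1
    simpa [mul_assoc] using h1
  rw [← Subgroup.normalizer_eq_top_iff]
  rcases eq_top_or_exists_le_coatom (Subgroup.normalizer (S : Set G)) with h1 | ⟨M, hM, hle⟩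
  · exact h1
  · exfalso
    apply hM.1
    rw [eq_top_iff]
    intro g _
    obtain ⟨α, hα, hg⟩ := key g
    have := M.mul_mem (hFr M hM hα) (M.inv_mem (hle hg))
    simpa using this

/-- If `A` is a minimal normal `p`-subgroup contained in all maximal subgroups, a normal subgroup
`T ≥ A` with `T/A` of order prime to `p` centralizes `A`, because `A` has a normal complement in
`T`. -/
theorem IsChiefFactorMap.act_trivial_of_coprime [Finite G] (hp : p.Prime) {A T : Subgroup G}
    {ρ : Representation (ZMod p) G V} {φ : A → V} (h : IsChiefFactorMap p A ⊥ ρ φ)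
    (hFr : ∀ M : Subgroup G, IsCoatom M → A ≤ M) (hTn : T.Normal) (hAT : A ≤ T)
    (hT : ∀ x ∈ T, ∃ e : ℕ, e.Coprime p ∧ x ^ e ∈ A) : ∀ t ∈ T, ∀ v, ρ t v = v := by
  obtain ⟨S, hS, hSA, hST⟩ := exists_normal_complement hp h hFr hTn hAT hT
  intro t ht
  rw [h.act_trivial_iff]
  intro a ha
  rw [← hST, Subgroup.mem_sup_of_normal_left] at ht
  obtain ⟨s, hs, b, hb, rfl⟩ := ht
  have h1 : s * a = a * s :=
    Subgroup.commute_of_normal_of_disjoint S A hS h.1.1 (disjoint_iff.2 hSA) s a hs ha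
  rw [mul_assoc, h.comm hb ha, ← mul_assoc, h1, mul_assoc]

end Complements

/-! ### Frattini chief factors -/

section Frattini

variable {p : ℕ} {G V : Type} [Group G] [AddCommGroup V] [Module (ZMod p) V]

theorem exists_chiefFactor_above [Finite G] {K R : Subgroup G} (hK : K.Normal) (hR : R.Normal)
    (hlt : K < R) : ∃ C, IsChiefFactor G C K ∧ C ≤ R := by
  obtain ⟨C, hCR, ⟨hCn, hKC⟩, hmin⟩ := exists_minimal_le_of_wellFoundedLT
    (fun C : Subgroup G => C.Normal ∧ K < C) R ⟨hR, hlt⟩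
  refine ⟨C, ⟨hCn, hK, hKC, fun N hN h1 h2 => ?_⟩, hCR⟩
  rcases h1.eq_or_lt with h | h
  · exact Or.inl h.symm
  · exact Or.inr (le_antisymm h2 (hmin ⟨hN, h⟩ h2))

/-- If every element of `Q` has a power with exponent prime to `p` in the center, then the index `d`
of the center is prime to `p`, and the elements of order prime to `p` are closed under
multiplication: the transfer into the center is the map `x ↦ x ^ d`. -/
theorem pow_mul_eq_one_of_central {Q : Type} [Group Q] [Finite Q] (hp : p.Prime)
    (hz : ∀ x : Q, ∃ e : ℕ, e.Coprime p ∧ x ^ e ∈ Subgroup.center Q) {x y : Q} {a b : ℕ}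
    (ha : a.Coprime p) (hb : b.Coprime p) (hx : x ^ a = 1) (hy : y ^ b = 1) :
    ∃ c : ℕ, c.Coprime p ∧ (x * y) ^ c = 1 := by
  have hpf : Fact p.Prime := ⟨hp⟩
  set d := (Subgroup.center Q).index with hd
  have hdc : d.Coprime p := by
    rw [Nat.coprime_comm, Nat.Prime.coprime_iff_not_dvd hp]
    intro hdvd
    obtain ⟨x, hx⟩ := exists_prime_orderOf_dvd_card' (G := Q ⧸ Subgroup.center Q) p hdvd
    induction x using QuotientGroup.induction_on with | _ t
    obtain ⟨e, he, ht⟩ := hz t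
    have h1 : (t : Q ⧸ Subgroup.center Q) ^ e = 1 := by
      rw [← QuotientGroup.mk_pow, QuotientGroup.eq_one_iff]; exact ht
    have h2 := orderOf_dvd_of_pow_eq_one h1
    rw [hx] at h2
    exact hp.one_lt.ne' (Nat.dvd_one.1 (he ▸ Nat.dvd_gcd h2 dvd_rfl))
  have hmul : (x * y) ^ d = x ^ d * y ^ d := by
    have h := congrArg Subtype.val (map_mul (MonoidHom.transferCenterPow Q) x y)
    rw [Subgroup.coe_mul] at h
    simpa only [MonoidHom.transferCenterPow_apply] using h
  have hcen : x ^ d ∈ Subgroup.center Q := by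
    rw [hd, ← MonoidHom.transferCenterPow_apply]; exact Subtype.property _
  have hcomm : Commute (x ^ d) (y ^ d) := ((Subgroup.mem_center_iff.1 hcen) _).symm
  refine ⟨d * (a * b), (hdc.mul_left (ha.mul_left hb)), ?_⟩
  rw [pow_mul, hmul, hcomm.mul_pow, ← pow_mul, ← pow_mul, mul_comm a b, ← mul_assoc,
    mul_comm d b, mul_comm b, mul_assoc, mul_comm b a, ← mul_assoc, mul_comm d a]
  rw [mul_assoc, pow_mul, hx, one_pow, one_mul, mul_comm, mul_comm d, mul_assoc, pow_mul, hy,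
    one_pow]

/-- A normal subgroup `R` acting trivially on all `p`-chief factors above `A` is `p`-nilpotent modulo
`A`: the elements of order prime to `p` modulo `A` form a normal subgroup. The proof goes down a
chief series, using `pow_mul_eq_one_of_central` at each `p`-chief factor. -/
theorem exists_normal_pPrime [Finite G] [Group.IsSolvable G] (hp : p.Prime) {A R : Subgroup G}
    (hA : A.Normal) (hR : R.Normal) (hAR : A ≤ R)
    (htriv : ∀ (C D : Subgroup G) (M : RepB p G) (φ : C → M.V), IsChiefFactorMap p C D M.ρ φ →
      A ≤ D → ∀ r ∈ R, M.ρ r = 1) :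
    ∃ T : Subgroup G, T.Normal ∧ A ≤ T ∧ ∀ x, x ∈ T ↔ x ∈ R ∧ ∃ e : ℕ, e.Coprime p ∧ x ^ e ∈ A := by
  have hmk : ∀ K : Subgroup G, (∀ x ∈ R, ∀ y ∈ R, (∃ e : ℕ, e.Coprime p ∧ x ^ e ∈ K) →
      (∃ e : ℕ, e.Coprime p ∧ y ^ e ∈ K) → ∃ e : ℕ, e.Coprime p ∧ (x * y) ^ e ∈ K) →
      ∃ T : Subgroup G, ∀ x, x ∈ T ↔ x ∈ R ∧ ∃ e : ℕ, e.Coprime p ∧ x ^ e ∈ K := by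
    intro K hK
    exact ⟨{ carrier := {x | x ∈ R ∧ ∃ e : ℕ, e.Coprime p ∧ x ^ e ∈ K}
             mul_mem' := fun {x y} hx hy => ⟨R.mul_mem hx.1 hy.1, hK x hx.1 y hy.1 hx.2 hy.2⟩
             one_mem' := ⟨R.one_mem, 1, Nat.coprime_one_left p, by simp⟩
             inv_mem' := fun {x} hx => ⟨R.inv_mem hx.1, by
               obtain ⟨e, he, h⟩ := hx.2
               exact ⟨e, he, by rw [inv_pow]; exact K.inv_mem h⟩⟩ }, fun x => Iff.rfl⟩
  have key : ∀ K : Subgroup G, K.Normal → A ≤ K → K ≤ R →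
      (∀ x ∈ R, ∀ y ∈ R, (∃ e : ℕ, e.Coprime p ∧ x ^ e ∈ K) →
      (∃ e : ℕ, e.Coprime p ∧ y ^ e ∈ K) → ∃ e : ℕ, e.Coprime p ∧ (x * y) ^ e ∈ K) := by
    intro K
    induction K using WellFoundedGT.induction with | _ K ih
    intro hK hAK hKR x hx y hy hxe hye
    rcases hKR.eq_or_lt with rfl | hlt
    · exact ⟨1, Nat.coprime_one_left p, by simpa using K.mul_mem hx hy⟩
    obtain ⟨K₁, hch, hK₁R⟩ := exists_chiefFactor_above hK hR hlt
    have ih₁ := ih K₁ hch.2.2.1 hch.1 (hAK.trans hch.2.2.1.le) hK₁R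
    have hKK₁ := hch.2.2.1.le
    have hxe' : ∃ e : ℕ, e.Coprime p ∧ x ^ e ∈ K₁ := hxe.imp fun e h => ⟨h.1, hKK₁ h.2⟩
    have hye' : ∃ e : ℕ, e.Coprime p ∧ y ^ e ∈ K₁ := hye.imp fun e h => ⟨h.1, hKK₁ h.2⟩
    obtain ⟨q, hq, M, φ, hφ⟩ := exists_chiefFactorMap hch
    by_cases hqp : q = p
    · subst hqp
      have hcen : ∀ r ∈ R, ∀ k ∈ K₁, k⁻¹ * (r * k * r⁻¹) ∈ K := by
        intro r hr k hk
        have h1 := hφ.2.2.2.2 r ⟨k, hk⟩ ⟨_, hch.1.conj_mem k hk r⟩ rfl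
        rw [htriv _ _ M φ hφ hAK r hr] at h1
        exact (hφ.map_eq_iff _ _).1 h1.symm
      obtain ⟨T, hT⟩ := hmk K₁ ih₁
      let N := K.subgroupOf T
      let f := QuotientGroup.mk' N
      have hfs : Surjective f := QuotientGroup.mk'_surjective N
      have hQ : ∀ t : T, f t = 1 ↔ (t : G) ∈ K := fun t => by
        rw [QuotientGroup.mk'_apply, QuotientGroup.eq_one_iff, Subgroup.mem_subgroupOf]
      have hz : ∀ t : T ⧸ N, ∃ e : ℕ, e.Coprime q ∧ t ^ e ∈ Subgroup.center (T ⧸ N) := by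
        intro t
        obtain ⟨t, rfl⟩ := hfs t
        obtain ⟨htR, e, he, hte⟩ := (hT t).1 t.2
        refine ⟨e, he, ?_⟩
        rw [Subgroup.mem_center_iff]
        intro s
        obtain ⟨s, rfl⟩ := hfs s
        have hs := (hT s).1 s.2
        have h1 : f ((t ^ e)⁻¹ * (s * t ^ e * s⁻¹)) = 1 := (hQ _).2 (hcen s hs.1 _ hte)
        rw [map_mul, map_inv, inv_mul_eq_one, map_mul, map_mul, map_inv, eq_mul_inv_iff_mul_eq,
          map_pow] at h1
        exact h1.symm
      obtain ⟨a, ha, hxa⟩ := hxe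
      obtain ⟨b, hb, hyb⟩ := hye
      have hxT : x ∈ T := (hT x).2 ⟨hx, hxe'⟩
      have hyT : y ∈ T := (hT y).2 ⟨hy, hye'⟩
      obtain ⟨c, hc, h⟩ := pow_mul_eq_one_of_central hq hz ha hb
        (x := f ⟨x, hxT⟩) (y := f ⟨y, hyT⟩)
        (by rw [← map_pow]; exact (hQ _).2 hxa) (by rw [← map_pow]; exact (hQ _).2 hyb)
      rw [← map_mul, ← map_pow] at h
      exact ⟨c, hc, (hQ _).1 h⟩
    · obtain ⟨e, he, h⟩ := ih₁ x hx y hy hxe' hye'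
      refine ⟨e * q, he.mul_left ((Nat.coprime_primes hq hp).2 hqp), ?_⟩
      rw [pow_mul]
      exact hφ.pow_mem _ h
  obtain ⟨T, hT⟩ := hmk A (key A hA le_rfl hAR)
  refine ⟨T, ⟨fun x hx g => ?_⟩, fun a ha => ?_, hT⟩
  · rw [hT] at *
    obtain ⟨h1, e, he, h2⟩ := hx
    exact ⟨hR.conj_mem x h1 g, e, he, by rw [conj_pow]; exact hA.conj_mem _ h2 g⟩
  · exact (hT a).2 ⟨hAR ha, 1, Nat.coprime_one_left p, by simpa using ha⟩

/-- A normal subgroup that acts on an irreducible module in characteristic `p` as a `p`-group acts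
trivially: its fixed points form a nonzero submodule. -/
theorem IsIrreducibleRep.act_trivial_of_pGroup [Finite V] (hp : p.Prime)
    {ρ : Representation (ZMod p) G V} (hirr : IsIrreducibleRep ρ) {R : Subgroup G} (hR : R.Normal)
    (h : ∀ r ∈ R, ∃ k : ℕ, ρ (r ^ p ^ k) = 1) : ∀ r ∈ R, ρ r = 1 := by
  have hpf : Fact p.Prime := ⟨hp⟩
  let P : Subgroup (V →ₗ[ZMod p] V)ˣ := R.map ρ.asGroupHom
  have hP : IsPGroup p P := by
    rintro ⟨_, r, hr, rfl⟩
    obtain ⟨k, hk⟩ := h r hr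
    refine ⟨k, ?_⟩
    refine Subtype.ext (Units.ext ?_)
    rw [map_pow] at hk
    exact hk
  have hsmul : ∀ r (hr : r ∈ R) (v : V),
      (⟨ρ.asGroupHom r, r, hr, rfl⟩ : P) • v = ρ r v := fun r hr v => rfl
  have hdvd : p ∣ Nat.card V := by
    obtain ⟨v, hv⟩ := @exists_ne V hirr.1 0
    have : addOrderOf v = p := by
      refine addOrderOf_eq_prime ?_ hv
      rw [← Nat.cast_smul_eq_nsmul (ZMod p)]; simp
    rw [← this]
    exact addOrderOf_dvd_natCard v
  obtain ⟨w, hw, hw0⟩ := hP.exists_fixed_point_of_prime_dvd_card_of_fixed_point V hdvd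
    (a := 0) (by rintro ⟨_, r, hr, rfl⟩; rw [hsmul r hr, map_zero])
  let W : Submodule (ZMod p) V :=
    { carrier := {v | ∀ r ∈ R, ρ r v = v}
      add_mem' := fun {a b} ha hb r hr => by rw [map_add, ha r hr, hb r hr]
      zero_mem' := fun r hr => map_zero _
      smul_mem' := fun c x hx r hr => by rw [map_smul, hx r hr] }
  have hW : ∀ v, v ∈ W ↔ ∀ r ∈ R, ρ r v = v := fun v => Iff.rfl
  have hinv : ∀ g, ∀ v ∈ W, ρ g v ∈ W := by
    intro g v hv r hr
    have h1 := hv _ (by simpa using hR.conj_mem r hr g⁻¹ : g⁻¹ * r * g ∈ R)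
    calc ρ r (ρ g v) = ρ g (ρ (g⁻¹ * r * g) v) := by
          rw [← Module.End.mul_apply, ← Module.End.mul_apply, ← map_mul, ← map_mul]
          congr 2; group
      _ = ρ g v := by rw [h1]
  rcases hirr.2 W hinv with h1 | h1
  · exfalso
    have : w ∈ W := fun r hr => by rw [← hsmul r hr]; exact hw _
    rw [h1, Submodule.mem_bot] at this
    exact hw0 this.symm
  · intro r hr
    ext v
    exact (hW v).1 (by rw [h1]; trivial) r hr

theorem exists_pow_mem_of_pPrime [Finite G] (hp : p.Prime) (r : G) :
    ∃ k e : ℕ, e.Coprime p ∧ (r ^ p ^ k) ^ e = 1 := by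
  obtain ⟨k, e, he, h⟩ := Nat.exists_eq_pow_mul_and_not_dvd (orderOf_pos r).ne' p hp.ne_one
  refine ⟨k, e, (Nat.coprime_comm.1 ((Nat.Prime.coprime_iff_not_dvd hp).2 he)), ?_⟩
  rw [← pow_mul, ← h, pow_orderOf_eq_one]

/-- If `A` is a minimal normal subgroup contained in all maximal subgroups, an element acting
trivially on all `p`-chief factors above `A` acts trivially on `A`. -/
theorem IsChiefFactorMap.act_trivial_of_frattini [Finite G] [Group.IsSolvable G] (hp : p.Prime)
    {A : Subgroup G} {ρ : Representation (ZMod p) G V} {φ : A → V}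
    (h : IsChiefFactorMap p A ⊥ ρ φ) (hFr : ∀ M : Subgroup G, IsCoatom M → A ≤ M) {r : G}
    (hr : ∀ (C D : Subgroup G) (M : RepB p G) (φ : C → M.V), IsChiefFactorMap p C D M.ρ φ →
      A ≤ D → M.ρ r = 1) : ρ r = 1 := by
  have hV : Finite V := Finite.of_surjective φ h.2.2.1
  let R : Subgroup G :=
    { carrier := {g | ∀ (C D : Subgroup G) (M : RepB p G) (φ : C → M.V),
        IsChiefFactorMap p C D M.ρ φ → A ≤ D → M.ρ g = 1}
      mul_mem' := fun {a b} ha hb C D M φ hφ hD => by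
        rw [map_mul, ha C D M φ hφ hD, hb C D M φ hφ hD, one_mul]
      one_mem' := fun C D M φ hφ hD => map_one _
      inv_mem' := fun {a} ha C D M φ hφ hD => by
        have h1 : M.ρ a⁻¹ * M.ρ a = 1 := by rw [← map_mul]; simp
        rwa [ha C D M φ hφ hD, mul_one] at h1 }
  have hmem : ∀ g, g ∈ R ↔ ∀ (C D : Subgroup G) (M : RepB p G) (φ : C → M.V),
        IsChiefFactorMap p C D M.ρ φ → A ≤ D → M.ρ g = 1 := fun g => Iff.rfl
  have hRn : R.Normal := ⟨fun g hg x C D M φ hφ hD => by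
    rw [map_mul, map_mul, hg C D M φ hφ hD, mul_one, ← map_mul]; simp⟩
  have hA := h.1.1
  have hAR : A ≤ R := by
    intro a ha C D M φ hφ hD
    ext v
    obtain ⟨c, rfl⟩ := hφ.2.2.1 v
    have h1 := hφ.2.2.2.2 a c ⟨_, hφ.1.1.conj_mem c c.2 a⟩ rfl
    rw [← h1, Module.End.one_apply, eq_comm, hφ.map_eq_iff]
    refine hD ?_
    have h2 := A.mul_mem (hA.conj_mem a ha (c : G)⁻¹) (A.inv_mem ha)
    simpa [mul_assoc] using h2
  obtain ⟨T, hTn, hAT, hT⟩ := exists_normal_pPrime hp hA hRn hAR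
    (fun C D M φ hφ hD r hr => hr C D M φ hφ hD)
  have hTt := h.act_trivial_of_coprime hp hFr hTn hAT (fun x hx => ((hT x).1 hx).2)
  refine h.irreducible.act_trivial_of_pGroup hp hRn (fun r hr => ?_) r hr
  obtain ⟨k, e, he, hk⟩ := exists_pow_mem_of_pPrime hp r
  refine ⟨k, LinearMap.ext fun v => hTt _ ((hT _).2 ⟨R.pow_mem hr _, e, he, ?_⟩) v⟩
  rw [hk]; exact A.one_mem

/-- If `A` is a minimal normal `p`-subgroup contained in all maximal subgroups, there is a
`p`-chief factor above `A`: otherwise `G/A` is a `p'`-group and `A` has a normal complement. -/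
theorem IsChiefFactorMap.exists_chiefFactor_of_frattini [Finite G] [Group.IsSolvable G]
    (hp : p.Prime) {A : Subgroup G} {ρ : Representation (ZMod p) G V} {φ : A → V}
    (h : IsChiefFactorMap p A ⊥ ρ φ) (hFr : ∀ M : Subgroup G, IsCoatom M → A ≤ M) :
    ∃ (C D : Subgroup G) (M : RepB p G) (φ : C → M.V), IsChiefFactorMap p C D M.ρ φ ∧ A ≤ D := by
  by_contra hno
  have hA := h.1.1
  obtain ⟨T, hTn, hAT, hT⟩ := exists_normal_pPrime (R := ⊤) hp hA inferInstance le_top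
    (fun C D M φ hφ hD r hr => absurd ⟨C, D, M, φ, hφ, hD⟩ hno)
  have hTtop : T = ⊤ := by
    by_contra hne
    obtain ⟨C, hC, -⟩ := exists_chiefFactor_above hTn inferInstance (lt_top_iff_ne_top.2 hne)
    obtain ⟨q, hq, M, φ, hφ⟩ := exists_chiefFactorMap hC
    by_cases hqp : q = p
    · subst hqp
      exact hno ⟨C, T, M, φ, hφ, hAT⟩
    · refine not_le_of_gt hC.2.2.1 fun c hc => ?_
      obtain ⟨-, e, he, h1⟩ := (hT _).1 (hφ.pow_mem c hc)
      refine (hT c).2 ⟨trivial, q * e, ((Nat.coprime_primes hq hp).2 hqp).mul_left he, ?_⟩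
      rw [pow_mul]; exact h1
  obtain ⟨S, hS, hSA, hST⟩ := exists_normal_complement hp h hFr hTn hAT
    (fun x hx => ((hT x).1 hx).2)
  rw [hTtop] at hST
  rcases eq_top_or_exists_le_coatom S with h1 | ⟨M, hM, hle⟩
  · rw [h1, top_inf_eq] at hSA
    exact h.1.2.2.1.ne hSA.symm
  · apply hM.1
    rw [eq_top_iff, ← hST]
    exact sup_le hle (hFr M hM)

end Frattini

/-! ### Modules with `X`-central composition factors -/

section Modules

variable {p : ℕ} {G U U' U'' V W : Type} [Group G] [AddCommGroup V] [Module (ZMod p) V]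
  [AddCommGroup W] [Module (ZMod p) W] [AddCommGroup U] [Module (ZMod p) U]
  [AddCommGroup U'] [Module (ZMod p) U'] [AddCommGroup U''] [Module (ZMod p) U'']

/-- All composition factors of the module are `X`-central. -/
def AllXC (X : GrpB → Prop) (ρ : Representation (ZMod p) G V) : Prop :=
  ∀ C : RepB p G, IsCompositionFactorOf C.ρ ρ → XC X C.ρ

variable {X : GrpB → Prop}

theorem allXC_of_subsingleton [Subsingleton V] (ρ : Representation (ZMod p) G V) : AllXC X ρ := by
  rintro C ⟨⟨hC, -⟩, T, S, -, -, -, ψ, hψ, -⟩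
  have : Subsingleton C.V := hψ.subsingleton
  exact absurd hC (not_nontrivial_iff_subsingleton.2 this)

/-- An irreducible module is its own only composition factor. -/
theorem AllXC.of_irreducible {ρ : Representation (ZMod p) G V} (hirr : IsIrreducibleRep ρ)
    (h : XC X ρ) : AllXC X ρ := by
  rintro C ⟨⟨hC, -⟩, T, S, hT, hS, hST, ψ, hψ, hker, hact⟩
  have hT1 : T = ⊤ := by
    rcases hirr.2 T hT with h1 | h1
    · subst h1
      have : Subsingleton C.V := hψ.subsingleton
      exact absurd hC (not_nontrivial_iff_subsingleton.2 this)
    · exact h1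
  have hS1 : S = ⊥ := by
    rcases hirr.2 S hS with h1 | h1
    · exact h1
    · exfalso
      obtain ⟨c, hc⟩ := @exists_ne _ hC 0
      obtain ⟨t, rfl⟩ := hψ c
      exact hc ((hker t).2 (by rw [h1]; trivial))
  subst hT1 hS1
  let e : V →+ C.V := AddMonoidHom.mk' (fun v => ψ ⟨v, trivial⟩) (fun a b => by
    rw [← map_add]; rfl)
  have he : Bijective e := by
    constructor
    · rw [injective_iff_map_eq_zero]
      intro a ha
      exact (hker _).1 ha
    · intro c
      obtain ⟨t, rfl⟩ := hψ c
      exact ⟨t, rfl⟩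
  refine h.transfer (AddEquiv.ofBijective e he) (fun l g => l = g) (fun l => ⟨l, rfl⟩)
    (fun l => ⟨l, rfl⟩) ?_
  rintro g _ rfl v
  exact hact g ⟨v, trivial⟩ _ rfl

theorem AllXC.xc {M : RepB p G} (hirr : IsIrreducibleRep M.ρ) (h : AllXC X M.ρ) : XC X M.ρ := by
  refine h M ⟨hirr, ⊤, ⊥, by simp, by simp, bot_le, (⊤ : Submodule (ZMod p) M.V).subtype, ?_, ?_, ?_⟩
  · intro v; exact ⟨⟨v, trivial⟩, rfl⟩
  · intro t; rfl
  · intro g t t' h; exact h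

/-- A composition factor of the middle term of an exact sequence is a composition factor of one of
the outer terms. -/
theorem AllXC.exact [Fact p.Prime] {ρ : Representation (ZMod p) G U}
    {ρ' : Representation (ZMod p) G U'} {ρ'' : Representation (ZMod p) G U''}
    (f : U →ₗ[ZMod p] U') (g : U' →ₗ[ZMod p] U'') (hf : ∀ x u, f (ρ x u) = ρ' x (f u))
    (hg : ∀ x u, g (ρ' x u) = ρ'' x (g u)) (hfg : ∀ u, g u = 0 → ∃ v, f v = u)
    (h : AllXC X ρ) (h'' : AllXC X ρ'') : AllXC X ρ' := by
  rintro C ⟨hC, T, S, hT, hS, hST, ψ, hψ, hker, hact⟩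
  let W : Submodule (ZMod p) C.V := ((LinearMap.ker g).comap T.subtype).map ψ
  have hW : ∀ c, c ∈ W ↔ ∃ t : T, g t = 0 ∧ ψ t = c := fun c => Iff.rfl
  have hWinv : ∀ x, ∀ c ∈ W, C.ρ x c ∈ W := by
    intro x c hc
    obtain ⟨t, ht, rfl⟩ := (hW c).1 hc
    exact (hW _).2 ⟨⟨ρ' x t, hT x t t.2⟩, by rw [hg, ht, map_zero], hact x t _ rfl⟩
  rcases hC.2 W hWinv with h1 | h1
  · have h2 : ∀ t : T, g t = 0 → ψ t = 0 := fun t ht => by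
      rw [← Submodule.mem_bot (ZMod p), ← h1, hW]; exact ⟨t, ht, rfl⟩
    let gT : T →ₗ[ZMod p] T.map g :=
      (g.comp T.subtype).codRestrict (T.map g) (fun t => ⟨t, t.2, rfl⟩)
    have hgT : ∀ t, (gT t : U'') = g t := fun t => rfl
    have hgTs : Surjective gT := by
      rintro ⟨_, t, ht, rfl⟩
      exact ⟨⟨t, ht⟩, rfl⟩
    obtain ⟨s, hs⟩ := gT.exists_rightInverse_of_surjective (LinearMap.range_eq_top.2 hgTs)
    have hs' : ∀ y, gT (s y) = y := fun y => LinearMap.congr_fun hs y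
    have hψs : ∀ t, ψ (s (gT t)) = ψ t := by
      intro t
      rw [← sub_eq_zero, ← map_sub]
      apply h2
      have := hs' (gT t)
      rw [← sub_eq_zero, ← map_sub] at this
      exact congrArg Subtype.val this
    refine h'' C ⟨hC, T.map g, S.map g, ?_, ?_, Submodule.map_mono hST, ψ.comp s, ?_, ?_, ?_⟩
    · rintro x _ ⟨t, ht, rfl⟩
      exact ⟨ρ' x t, hT x t ht, hg x t⟩
    · rintro x _ ⟨t, ht, rfl⟩
      exact ⟨ρ' x t, hS x t ht, hg x t⟩
    · intro c
      obtain ⟨t, rfl⟩ := hψ c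
      exact ⟨gT t, hψs t⟩
    · intro y
      obtain ⟨t, rfl⟩ := hgTs y
      rw [LinearMap.comp_apply, hψs, hker]
      constructor
      · intro ht; exact ⟨t, ht, rfl⟩
      · rintro ⟨t', ht', e⟩
        rw [← hker t]
        have h3 : ψ (t - ⟨t', hST ht'⟩) = 0 := h2 _ (by
          rw [AddSubgroupClass.coe_sub, map_sub, e, hgT, sub_self])
        rw [map_sub, (hker ⟨t', _⟩).2 ht', sub_zero] at h3
        exact h3
    · intro x y y' e
      obtain ⟨t, rfl⟩ := hgTs y
      have h3 : y' = gT ⟨ρ' x t, hT x t t.2⟩ := Subtype.ext (by rw [e, hgT, hgT, hg])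
      rw [h3, LinearMap.comp_apply, LinearMap.comp_apply, hψs, hψs]
      exact hact x t _ rfl
  · refine h C ⟨hC, T.comap f, S.comap f, ?_, ?_, Submodule.comap_mono hST,
      ψ.comp ((f.comp (T.comap f).subtype).codRestrict T (fun t => t.2)), ?_, ?_, ?_⟩
    · intro x u hu
      rw [Submodule.mem_comap, hf]; exact hT x _ hu
    · intro x u hu
      rw [Submodule.mem_comap, hf]; exact hS x _ hu
    · intro c
      obtain ⟨⟨t, htT⟩, ht, rfl⟩ := (hW c).1 (by rw [h1]; trivial)
      obtain ⟨u, rfl⟩ := hfg t ht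
      exact ⟨⟨u, htT⟩, rfl⟩
    · intro t
      exact hker _
    · intro x t t' e
      refine hact x _ _ ?_
      change f t' = ρ' x (f t)
      rw [e, hf]

theorem AllXC.of_injective [Fact p.Prime] {ρ : Representation (ZMod p) G U}
    {ρ' : Representation (ZMod p) G U'} (f : U →ₗ[ZMod p] U')
    (hf : ∀ x u, f (ρ x u) = ρ' x (f u)) (hinj : Injective f) (h : AllXC X ρ') : AllXC X ρ :=
  AllXC.exact (ρ := (1 : Representation (ZMod p) G PUnit)) 0 f (by simp) hf
    (fun u hu => ⟨0, by rw [map_zero]; exact (hinj (hu.trans (map_zero f).symm)).symm⟩)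
    (allXC_of_subsingleton _) h

theorem AllXC.of_surjective [Fact p.Prime] {ρ : Representation (ZMod p) G U}
    {ρ' : Representation (ZMod p) G U'} (f : U →ₗ[ZMod p] U')
    (hf : ∀ x u, f (ρ x u) = ρ' x (f u)) (hsurj : Surjective f) (h : AllXC X ρ) : AllXC X ρ' :=
  AllXC.exact (ρ'' := (1 : Representation (ZMod p) G PUnit)) f 0 hf (by simp)
    (fun u _ => hsurj u) h (allXC_of_subsingleton _)

theorem AllXC.prod [Fact p.Prime] {ρ : Representation (ZMod p) G V}
    {ρ' : Representation (ZMod p) G W} (h : AllXC X ρ) (h' : AllXC X ρ') :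
    AllXC X (ρ.prod ρ') :=
  AllXC.exact (LinearMap.inl _ _ _) (LinearMap.snd _ _ _) (fun x u => by simp)
    (fun x u => by simp) (fun u hu => ⟨u.1, by ext <;> simp_all⟩) h h'

/-- Dévissage: a property of modules that is inherited by extensions and holds for irreducible
`X`-central modules holds for all modules with `X`-central composition factors. -/
theorem AllXC.devissage [Fact p.Prime] (Q : RepB p G → Prop)
    (h0 : ∀ M : RepB p G, Subsingleton M.V → Q M)
    (hext : ∀ (M N K : RepB p G) (f : M.V →ₗ[ZMod p] N.V) (g : N.V →ₗ[ZMod p] K.V),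
      (∀ x u, f (M.ρ x u) = N.ρ x (f u)) → (∀ x u, g (N.ρ x u) = K.ρ x (g u)) →
      Function.Exact f g → Surjective g → Q M → Q K → Q N)
    (hirr : ∀ M : RepB p G, Module.Finite (ZMod p) M.V → IsIrreducibleRep M.ρ → XC X M.ρ → Q M) :
    ∀ M : RepB p G, Module.Finite (ZMod p) M.V → AllXC X M.ρ → Q M := by
  intro M
  induction hn : Module.finrank (ZMod p) M.V using Nat.strong_induction_on generalizing M with
  | _ n ih =>
  subst hn
  intro hfin hM
  rcases subsingleton_or_nontrivial M.V with h1 | h1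
  · exact h0 M h1
  by_cases h2 : IsIrreducibleRep M.ρ
  · exact hirr M hfin h2 (hM.xc h2)
  have h3 : ∃ S : Submodule (ZMod p) M.V, (∀ (g : G), ∀ v ∈ S, M.ρ g v ∈ S) ∧ S ≠ ⊥ ∧ S ≠ ⊤ := by
    by_contra hno
    refine h2 ⟨h1, fun S hS => ?_⟩
    by_contra hS2
    exact hno ⟨S, hS, not_or.1 hS2⟩
  obtain ⟨S, hS, hSb, hSt⟩ := h3
  let M₁ : RepB p G := ⟨S, M.ρ.subrepresentation S hS⟩
  let M₂ : RepB p G := ⟨M.V ⧸ S, M.ρ.quotient S hS⟩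
  have hf : ∀ x (u : S), S.subtype (M₁.ρ x u) = M.ρ x (S.subtype u) := fun x u => rfl
  have hg : ∀ x u, S.mkQ (M.ρ x u) = M₂.ρ x (S.mkQ u) := fun x u => rfl
  refine hext M₁ M M₂ S.subtype S.mkQ hf hg ?_ (Submodule.mkQ_surjective S) ?_ ?_
  · exact LinearMap.exact_subtype_mkQ S
  · refine ih (Module.finrank (ZMod p) S) (Submodule.finrank_lt hSt) M₁ rfl ?_ ?_
    · exact inferInstanceAs (Module.Finite (ZMod p) S)
    · exact hM.of_injective S.subtype hf S.subtype_injective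
  · refine ih (Module.finrank (ZMod p) (M.V ⧸ S)) ?_ M₂ rfl ?_ ?_
    · have h4 := Submodule.finrank_quotient_add_finrank S
      have h5 : 0 < Module.finrank (ZMod p) S := by
        have := (Submodule.nontrivial_iff_ne_bot).2 hSb
        exact Module.finrank_pos
      omega
    · exact inferInstanceAs (Module.Finite (ZMod p) (M.V ⧸ S))
    · exact hM.of_surjective S.mkQ hg (Submodule.mkQ_surjective S)

end Modules

/-! ### Tensor products -/

section Tensor

variable {p : ℕ} {G V W : Type} [Group G] [AddCommGroup V] [Module (ZMod p) V]
  [AddCommGroup W] [Module (ZMod p) W]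

/-- A split extension `H` of an irreducible module `V`, together with its socle `A ≅ V` and the
action of `H` on `V`, in which `j v * π g` acts as `g`. -/
theorem exists_socle_rep {ρ : Representation (ZMod p) G V} (hirr : IsIrreducibleRep ρ)
    {H : Type} [Group H] (hH : IsSplitModuleExtension ρ H) :
    ∃ (j : V → H) (π : G →* H) (A : Subgroup H) (ρH : Representation (ZMod p) H V) (φ : A → V),
      j 0 = 1 ∧
      (∀ v w g g', (j v * π g) * (j w * π g') = j (v + ρ g w) * π (g * g')) ∧
      (∀ h : H, ∃ (v : V) (g : G), h = j v * π g) ∧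
      IsMinimalNormalSubgroup H A ∧ (∀ h, h ∈ A ↔ ∃ v, j v = h) ∧
      IsChiefFactorMap p A ⊥ ρH φ ∧ ∀ v g, ρH (j v * π g) = ρ g := by
  obtain ⟨j, π, hadd, h0, hact, hker, hsurj, hsplit⟩ := hH
  obtain ⟨A, hA, hmin, -⟩ := splitExtension_socle hirr hadd h0 hact hker hsurj
  have hneg : ∀ v, j (-v) = (j v)⁻¹ := fun v => by
      rw [eq_inv_iff_mul_eq_one, ← hadd, neg_add_cancel, h0]
  have hinj : Injective j := fun v w h => by
    rw [← sub_eq_zero, ← h0, sub_eq_add_neg, hadd, hneg, h, mul_inv_cancel]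
  have hcomm : ∀ v w, j v * j w * (j v)⁻¹ = j w := fun v w => by
    rw [← hneg, ← hadd, ← hadd]; congr 1; abel
  have hconj : ∀ v g w, (j v * π g) * j w * (j v * π g)⁻¹ = j (ρ g w) := fun v g w => by
    rw [mul_inv_rev]
    calc _ = j v * (π g * j w * (π g)⁻¹) * (j v)⁻¹ := by group
      _ = _ := by rw [← hact, hcomm]
  have hmul : ∀ v w g g', (j v * π g) * (j w * π g') = j (v + ρ g w) * π (g * g') := by
    intro v w g g'
    rw [hadd, hact, map_mul]; group
  have hwd : ∀ v w g g', j v * π g = j w * π g' → ρ g = ρ g' := by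
    intro v w g g' h
    ext x
    apply hinj
    rw [← hconj v, h, hconj]
  obtain ⟨ρH, hρH⟩ := exists_rep_of_rel ρ (fun (h : H) g => ∃ v, h = j v * π g)
    (fun h => by obtain ⟨v, g, e⟩ := hsurj h; exact ⟨g, v, e⟩)
    ⟨0, by rw [(h0 0).2 rfl]; simp⟩
    (by rintro _ _ g g' ⟨v, rfl⟩ ⟨w, rfl⟩; exact ⟨_, hmul v w g g'⟩)
    (by rintro _ g g' ⟨v, rfl⟩ ⟨w, h⟩; exact hwd v w g g' h)
  have hφ : ∀ a : A, ∃ v, j v = a := fun a => (hA a).1 a.2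
  choose φ hφ using hφ
  refine ⟨j, π, A, ρH, φ, (h0 0).2 rfl, hmul, hsurj, hmin, hA,
    ⟨⟨hmin.1, inferInstance, bot_lt_iff_ne_bot.2 hmin.2.1, fun N hN _ h => hmin.2.2 N hN h⟩,
      ?_, ?_, ?_, ?_⟩, fun v g => hρH _ _ ⟨v, rfl⟩⟩
  · intro a b
    apply hinj
    rw [hadd, hφ, hφ, hφ]; rfl
  · intro v
    refine ⟨⟨j v, (hA _).2 ⟨v, rfl⟩⟩, hinj ?_⟩
    rw [hφ]
  · intro a
    rw [← h0, hφ, Subgroup.mem_bot]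
  · intro h a a' ha
    obtain ⟨v, g, rfl⟩ := hsurj h
    apply hinj
    rw [hφ, ha, hρH _ g ⟨v, rfl⟩, ← hconj v, hφ]

variable {X : GrpB → Prop}

/-- Subtensor closure in module form: the composition factors of the tensor product of two
irreducible `X`-central modules are `X`-central. -/
theorem allXC_tprod_of_irreducible (hp : p.Prime) (hXsub : SubtensorClosed X)
    {ρ : Representation (ZMod p) G V} {ρ' : Representation (ZMod p) G W}
    (hirr : IsIrreducibleRep ρ) (hirr' : IsIrreducibleRep ρ') (h : XC X ρ) (h' : XC X ρ') :
    AllXC X (ρ.tprod ρ') := by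
  rintro C ⟨hC, T, S, hT, hS, hST, ψ, hψ, hψker, hψact⟩
  obtain ⟨P, hP, hPs⟩ := h
  obtain ⟨Q, hQ, hQs⟩ := h'
  obtain ⟨j, π, A, ρP, φA, hj0, hmul, hsurj, hAmin, hA, hφA, hρP⟩ := exists_socle_rep hirr hPs
  obtain ⟨j', π', B, ρQ, φB, hj0', hmul', hsurj', hBmin, hB, hφB, hρQ⟩ :=
    exists_socle_rep hirr' hQs
  have hinv : ∀ v g, (j v * π g)⁻¹ = j (-(ρ g⁻¹ v)) * π g⁻¹ := fun v g => by
    rw [inv_eq_iff_mul_eq_one, hmul]; simp [hj0]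
  have hinv' : ∀ v g, (j' v * π' g)⁻¹ = j' (-(ρ' g⁻¹ v)) * π' g⁻¹ := fun v g => by
    rw [inv_eq_iff_mul_eq_one, hmul']; simp [hj0']
  -- the pairs of elements of the two split extensions induced by a common element of `G`
  let L : Subgroup (P.carrier × Q.carrier) :=
    { carrier := {x | ∃ v w g, x = (j v * π g, j' w * π' g)}
      mul_mem' := by
        rintro _ _ ⟨v, w, g, rfl⟩ ⟨v', w', g', rfl⟩
        exact ⟨_, _, g * g', Prod.ext (hmul _ _ _ _) (hmul' _ _ _ _)⟩
      one_mem' := ⟨0, 0, 1, by simp [hj0, hj0']; rfl⟩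
      inv_mem' := by
        rintro _ ⟨v, w, g, rfl⟩
        exact ⟨_, _, g⁻¹, Prod.ext (hinv _ _) (hinv' _ _)⟩ }
  let r : L → G → Prop := fun l g => ∃ v w, (l : P.carrier × Q.carrier) = (j v * π g, j' w * π' g)
  have hr : ∀ l, ∃ g, r l g := by
    rintro ⟨_, v, w, g, rfl⟩; exact ⟨g, v, w, rfl⟩
  have hr' : ∀ g, ∃ l, r l g := fun g => ⟨⟨_, 0, 0, g, rfl⟩, 0, 0, rfl⟩
  have hten : ∀ l g, r l g → (Representation.tprod
      (ρP.comp (MonoidHom.fst P.carrier Q.carrier))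
      (ρQ.comp (MonoidHom.snd P.carrier Q.carrier))).comp L.subtype l = ρ.tprod ρ' g := by
    rintro ⟨_, hl⟩ g ⟨v, w, rfl⟩
    have h1 := hρP v g
    have h2 := hρQ w g
    simp only [MonoidHom.comp_apply, Representation.tprod_apply, Subgroup.subtype_apply,
      MonoidHom.coe_fst, MonoidHom.coe_snd]
    rw [h1, h2]
  obtain ⟨C', hC'⟩ := exists_rep_of_rel C.ρ r hr ⟨0, 0, by simp [hj0, hj0']; rfl⟩
    (by rintro ⟨_, _⟩ ⟨_, _⟩ g g' ⟨v, w, rfl⟩ ⟨v', w', rfl⟩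
        exact ⟨_, _, Prod.ext (hmul _ _ _ _) (hmul' _ _ _ _)⟩)
    (by intro l g g' hg hg'
        ext c
        obtain ⟨t, rfl⟩ := hψ c
        rw [← hψact g t ⟨_, hT g t t.2⟩ rfl]
        refine hψact g' t _ ?_
        change (ρ.tprod ρ' g) _ = _
        rw [← hten l g hg, ← hten l g' hg'])
  have hC'irr : IsIrreducibleRep C' := by
    refine ⟨hC.1, fun Z hZ => hC.2 Z fun g v hv => ?_⟩
    obtain ⟨l, hl⟩ := hr' g
    rw [← hC' l g hl]
    exact hZ l v hv
  obtain ⟨H, hH⟩ := exists_splitExtension C'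
  refine ⟨H, ?_, hH.transfer (AddEquiv.refl _) (fun g l => r l g) hr' hr
    fun g l hl v => by rw [hC' l g hl]; rfl⟩
  refine hXsub P Q hP hQ p hp A B hAmin hBmin ⟨V, ρP⟩ φA hφA ⟨W, ρQ⟩ φB hφB L ?_ ?_ ?_ ⟨C.V, C'⟩
    ⟨hC'irr, T, S, ?_, ?_, hST, ψ, hψ, hψker, ?_⟩ H hH (splitExtension_primitive hC'irr hH)
  · rintro ⟨a, b⟩ hab
    rw [Subgroup.mem_prod] at hab
    obtain ⟨v, rfl⟩ := (hA a).1 hab.1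
    obtain ⟨w, rfl⟩ := (hB b).1 hab.2
    exact ⟨v, w, 1, by simp⟩
  · rw [eq_top_iff]
    intro x _
    obtain ⟨v, g, rfl⟩ := hsurj x
    exact ⟨_, ⟨v, 0, g, rfl⟩, rfl⟩
  · rw [eq_top_iff]
    intro x _
    obtain ⟨v, g, rfl⟩ := hsurj' x
    exact ⟨_, ⟨0, v, g, rfl⟩, rfl⟩
  · intro l x hx
    obtain ⟨g, hg⟩ := hr l
    rw [hten l g hg]
    exact hT g x hx
  · intro l x hx
    obtain ⟨g, hg⟩ := hr l
    rw [hten l g hg]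
    exact hS g x hx
  · intro l t t' ht
    obtain ⟨g, hg⟩ := hr l
    rw [hten l g hg] at ht
    rw [hψact g t t' ht, ← hC' l g hg]

/-- The modules all of whose composition factors are `X`-central are closed under tensor
products. -/
theorem AllXC.tprod [Fact p.Prime] (hXsub : SubtensorClosed X) {M N : RepB p G}
    [hMf : Module.Finite (ZMod p) M.V] [hNf : Module.Finite (ZMod p) N.V]
    (hM : AllXC X M.ρ) (hN : AllXC X N.ρ) : AllXC X (M.ρ.tprod N.ρ) := by
  revert M
  suffices h : ∀ M : RepB p G, Module.Finite (ZMod p) M.V → AllXC X M.ρ →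
      AllXC X (M.ρ.tprod N.ρ) from fun {M} hMf hM => h M hMf hM
  refine AllXC.devissage (fun M => AllXC X (M.ρ.tprod N.ρ)) ?_ ?_ ?_
  · intro M _
    exact allXC_of_subsingleton _
  · intro M₁ M₂ M₃ f g hf hg hfg hgs h₁ h₃
    have hex := rTensor_exact N.V hfg hgs
    refine AllXC.exact (f.rTensor N.V) (g.rTensor N.V) ?_ ?_ (fun u hu => (hex u).1 hu) h₁ h₃
    · intro x u
      induction u with
      | zero => simp
      | tmul a b => simp [hf]
      | add a b ha hb => simp only [map_add, ha, hb]
    · intro x u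
      induction u with
      | zero => simp
      | tmul a b => simp [hg]
      | add a b ha hb => simp only [map_add, ha, hb]
  · intro M _ hMirr hMx
    revert N
    suffices h : ∀ N : RepB p G, Module.Finite (ZMod p) N.V → AllXC X N.ρ →
        AllXC X (M.ρ.tprod N.ρ) from fun {N} hNf hN => h N hNf hN
    refine AllXC.devissage (fun N => AllXC X (M.ρ.tprod N.ρ)) ?_ ?_ ?_
    · intro N _
      exact allXC_of_subsingleton _
    · intro M₁ M₂ M₃ f g hf hg hfg hgs h₁ h₃
      have hex := lTensor_exact M.V hfg hgs
      refine AllXC.exact (f.lTensor M.V) (g.lTensor M.V) ?_ ?_ (fun u hu => (hex u).1 hu) h₁ h₃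
      · intro x u
        induction u with
        | zero => simp
        | tmul a b => simp [hf]
        | add a b ha hb => simp only [map_add, ha, hb]
      · intro x u
        induction u with
        | zero => simp
        | tmul a b => simp [hg]
        | add a b ha hb => simp only [map_add, ha, hb]
    · intro N _ hNirr hNx
      exact allXC_tprod_of_irreducible Fact.out hXsub hMirr hNirr hMx hNx

end Tensor

/-! ### The theorem of Burnside and Steinberg -/

section Steinberg

/-- A finite form of the Stone–Weierstrass theorem: an algebra of functions on a finite set, without
common zeros, contains every function that is constant on the classes of points it does not
separate. -/
theorem finite_stoneWeierstrass {k G : Type} [Field k] [Finite G] (𝓐 : (G → k) → Prop)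
    (hzero : 𝓐 0)
    (hadd : ∀ E F, 𝓐 E → 𝓐 F → 𝓐 (E + F)) (hmul : ∀ E F, 𝓐 E → 𝓐 F → 𝓐 (E * F))
    (hsmul : ∀ (c : k) E, 𝓐 E → 𝓐 (c • E)) (hne : ∀ g, ∃ F, 𝓐 F ∧ F g ≠ 0)
    (F₀ : G → k) (h₀ : ∀ g g', (∀ F, 𝓐 F → F g = F g') → F₀ g = F₀ g') : 𝓐 F₀ := by
  classical
  have := Fintype.ofFinite G
  have hsub : ∀ E F, 𝓐 E → 𝓐 F → 𝓐 (E - F) := fun E F hE hF => by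
    have := hadd _ _ hE (hsmul (-1) F hF)
    simpa [sub_eq_add_neg] using this
  -- `𝓐` has an element equal to `1` at `g` and vanishing at the points of `s` separated from `g`
  have peak : ∀ (g : G) (s : Finset G),
      ∃ E, 𝓐 E ∧ E g = 1 ∧ ∀ y ∈ s, (∃ F, 𝓐 F ∧ F y ≠ F g) → E y = 0 := by
    intro g s
    induction s using Finset.induction_on with
    | empty =>
      obtain ⟨F, hF, hg⟩ := hne g
      exact ⟨(F g)⁻¹ • F, hsmul _ _ hF, by simp [hg], by simp⟩
    | insert y s _ ih =>
      obtain ⟨E, hE, hEg, hEs⟩ := ih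
      by_cases h1 : ∃ F, 𝓐 F ∧ F y ≠ F g
      · obtain ⟨F, hF, hy⟩ := h1
        have hd : F g - F y ≠ 0 := sub_ne_zero.2 hy.symm
        refine ⟨(F g - F y)⁻¹ • (E * F - F y • E), hsmul _ _ (hsub _ _ (hmul _ _ hE hF)
          (hsmul _ _ hE)), ?_, ?_⟩
        · simp [hEg, hd]
        · intro z hz hz'
          rcases Finset.mem_insert.1 hz with rfl | hz
          · simp [mul_comm]
          · simp [hEs z hz hz']
      · refine ⟨E, hE, hEg, fun z hz hz' => ?_⟩
        rcases Finset.mem_insert.1 hz with rfl | hz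
        · exact absurd hz' h1
        · exact hEs z hz hz'
  have main : ∀ s : Finset G, ∃ F, 𝓐 F ∧ ∀ y ∈ s, F y = F₀ y := by
    intro s
    induction s using Finset.induction_on with
    | empty => exact ⟨0, hzero, by simp⟩
    | insert x s _ ih =>
      obtain ⟨F, hF, hFs⟩ := ih
      obtain ⟨E, hE, hEx, hEs⟩ := peak x s
      have hF' := hadd _ _ hF (hsmul (F₀ x - F x) _ hE)
      have hx : (F + (F₀ x - F x) • E) x = F₀ x := by simp [hEx]
      refine ⟨_, hF', fun y hy => ?_⟩
      rcases Finset.mem_insert.1 hy with rfl | hy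
      · exact hx
      · by_cases h1 : ∃ F, 𝓐 F ∧ F y ≠ F x
        · simp [hEs y hy h1, hFs y hy]
        · push Not at h1
          rw [h1 _ hF', hx, h₀ y x h1]
  obtain ⟨F, hF, h⟩ := main Finset.univ
  rwa [show F₀ = F from funext fun y => (h y (Finset.mem_univ y)).symm]

variable {p : ℕ} {G V : Type} [Group G] [AddCommGroup V] [Module (ZMod p) V]
  {X : GrpB → Prop}

/-- If a matrix coefficient, nonzero at `1`, of the irreducible module `V` is also a matrix
coefficient of `M`, then `V` is a composition factor of `M`: both modules map to the space of
functions on `G`, the former injectively. -/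
theorem xc_of_matrixCoefficient [Fact p.Prime] {σ : Representation (ZMod p) G V}
    (hirr : IsIrreducibleRep σ) {M : RepB p G} (hM : AllXC X M.ρ)
    (f : Module.Dual (ZMod p) V) (a : V) (l : Module.Dual (ZMod p) M.V) (m : M.V)
    (hfa : f a ≠ 0) (h : ∀ g, f (σ g a) = l (M.ρ g m)) : XC X σ := by
  let u : M.V →ₗ[ZMod p] (G → ZMod p) := LinearMap.pi fun g => l ∘ₗ M.ρ g
  let ι : V →ₗ[ZMod p] (G → ZMod p) := LinearMap.pi fun g => f ∘ₗ σ g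
  have hu : ∀ m g, u m g = l (M.ρ g m) := fun _ _ => rfl
  have hι : ∀ v g, ι v g = f (σ g v) := fun _ _ => rfl
  have hu' : ∀ x m g, u (M.ρ x m) g = u m (g * x) := fun x m g => by simp [hu]
  have hι' : ∀ x m g, ι (σ x m) g = ι m (g * x) := fun x m g => by simp [hι]
  have hinj : LinearMap.ker ι = ⊥ := by
    refine (hirr.2 (LinearMap.ker ι) fun g v hv => ?_).resolve_right fun htop => ?_
    · rw [LinearMap.mem_ker] at *
      ext x
      rw [hι', hv]; rfl
    · have : a ∈ LinearMap.ker ι := by rw [htop]; trivial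
      apply hfa
      have h2 := congrFun (LinearMap.mem_ker.1 this) 1
      simpa [hι] using h2
  have hrange : ∀ v, ∃ m', u m' = ι v := by
    have : (LinearMap.range u).comap ι = ⊤ := by
      refine (hirr.2 _ fun g v hv => ?_).resolve_left fun hbot => ?_
      · obtain ⟨m', hm'⟩ := hv
        refine ⟨M.ρ g m', ?_⟩
        ext x
        rw [hι', hu', hm']
      · have ha : a ∈ (LinearMap.range u).comap ι := ⟨m, by ext g; rw [hu, hι, h]⟩
        rw [hbot, Submodule.mem_bot] at ha
        exact hfa (by rw [ha, map_zero])
    intro v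
    have hv : v ∈ (LinearMap.range u).comap ι := by rw [this]; trivial
    exact hv
  have hιinj := LinearMap.ker_eq_bot.1 hinj
  let e := LinearEquiv.ofInjective ι hιinj
  have he : ∀ x, ι (e.symm x) = x := fun x => by
    conv_rhs => rw [← e.apply_symm_apply x]
    rfl
  refine hM ⟨V, σ⟩ ⟨hirr, (LinearMap.range ι).comap u, LinearMap.ker u, ?_, ?_, ?_,
    e.symm.toLinearMap ∘ₗ (u.restrict (p := (LinearMap.range ι).comap u) fun x hx => hx), ?_, ?_, ?_⟩
  · rintro g x ⟨v, hv⟩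
    refine ⟨σ g v, ?_⟩
    ext y
    rw [hι', hu', hv]
  · intro g x hx
    rw [LinearMap.mem_ker] at *
    ext y
    rw [hu', hx]; rfl
  · intro x hx
    rw [LinearMap.mem_ker] at hx
    exact ⟨0, by rw [hx, map_zero]⟩
  · intro v
    obtain ⟨m', hm'⟩ := hrange v
    refine ⟨⟨m', v, hm'.symm⟩, hιinj ?_⟩
    rw [LinearMap.comp_apply, LinearEquiv.coe_coe, he]
    exact hm'
  · intro t
    rw [← hιinj.eq_iff, LinearMap.comp_apply, LinearEquiv.coe_coe, he, map_zero]
    rfl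
  · intro g t t' ht
    apply hιinj
    ext x
    rw [hι', LinearMap.comp_apply, LinearEquiv.coe_coe, he, LinearMap.comp_apply,
      LinearEquiv.coe_coe, he]
    change u t' x = u t (x * g)
    rw [ht, hu']

/-- The theorem of Burnside and Steinberg, in the form needed here: an irreducible module on which
the common kernel of a family of modules acts trivially is a composition factor of a module
obtained from the family by direct sums and tensor products. If the composition factors of the
members of the family are `X`-central, so is the irreducible module. -/
theorem xc_of_faithful [hp : Fact p.Prime] [Finite G] (hXsub : SubtensorClosed X)
    (𝒱 : RepB p G → Prop) (hfin : ∀ M, 𝒱 M → Module.Finite (ZMod p) M.V)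
    (hnt : ∀ M, 𝒱 M → Nontrivial M.V) (hall : ∀ M, 𝒱 M → AllXC X M.ρ) (hex : ∃ M, 𝒱 M)
    {σ : Representation (ZMod p) G V} (hirr : IsIrreducibleRep σ)
    (hker : ∀ g, (∀ M, 𝒱 M → M.ρ g = 1) → σ g = 1) : XC X σ := by
  -- matrix coefficients of the modules with `X`-central composition factors
  let 𝓐 : (G → ZMod p) → Prop := fun F => ∃ M : RepB p G, Module.Finite (ZMod p) M.V ∧
    AllXC X M.ρ ∧ ∃ (l : Module.Dual (ZMod p) M.V) (m : M.V), ∀ g, F g = l (M.ρ g m)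
  have hdual : ∀ {W : Type} [AddCommGroup W] [Module (ZMod p) W] (w : W),
      (∀ l : Module.Dual (ZMod p) W, l w = 0) → w = 0 := fun w h =>
    (Module.forall_dual_apply_eq_zero_iff (ZMod p) w).1 h
  have hsmul : ∀ (c : ZMod p) E, 𝓐 E → 𝓐 (c • E) := by
    rintro c E ⟨M, hM, hMX, l, m, h⟩
    exact ⟨M, hM, hMX, c • l, m, fun g => by simp [h]⟩
  have hadd : ∀ E F, 𝓐 E → 𝓐 F → 𝓐 (E + F) := by
    rintro E F ⟨M, hM, hMX, l, m, h⟩ ⟨N, hN, hNX, l', m', h'⟩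
    refine ⟨⟨M.V × N.V, M.ρ.prod N.ρ⟩, inferInstanceAs (Module.Finite (ZMod p) (M.V × N.V)),
      hMX.prod hNX, l.coprod l', (m, m'), fun g => ?_⟩
    simp [h, h']
  have hmul : ∀ E F, 𝓐 E → 𝓐 F → 𝓐 (E * F) := by
    rintro E F ⟨M, hM, hMX, l, m, h⟩ ⟨N, hN, hNX, l', m', h'⟩
    refine ⟨⟨M.V ⊗[ZMod p] N.V, M.ρ.tprod N.ρ⟩,
      inferInstanceAs (Module.Finite (ZMod p) (M.V ⊗[ZMod p] N.V)),
      hMX.tprod hXsub hNX, TensorProduct.dualDistrib (ZMod p) M.V N.V (l ⊗ₜ l'), m ⊗ₜ m',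
      fun g => ?_⟩
    simp [h, h']
  have hne : ∀ g, ∃ F, 𝓐 F ∧ F g ≠ 0 := by
    intro g
    obtain ⟨M, hM⟩ := hex
    obtain ⟨m, hm⟩ := @exists_ne _ (hnt M hM) 0
    have h1 : ∃ l : Module.Dual (ZMod p) M.V, l m ≠ 0 := by
      by_contra hno
      push Not at hno
      exact hm (hdual m hno)
    obtain ⟨l, hl⟩ := h1
    refine ⟨fun x => l (M.ρ x (M.ρ g⁻¹ m)), ⟨M, hfin M hM, hall M hM, l, _, fun _ => rfl⟩, ?_⟩
    simpa using hl
  have hzero : 𝓐 0 := by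
    obtain ⟨F, hF, -⟩ := hne 1
    simpa using hsmul 0 F hF
  obtain ⟨a, ha⟩ := @exists_ne _ hirr.1 0
  have h1 : ∃ f : Module.Dual (ZMod p) V, f a ≠ 0 := by
    by_contra hno
    push Not at hno
    exact ha (hdual a hno)
  obtain ⟨f, hf⟩ := h1
  have h2 : 𝓐 fun g => f (σ g a) := by
    refine finite_stoneWeierstrass 𝓐 hzero hadd hmul hsmul hne _ fun g g' hgg => ?_
    have h3 : σ (g'⁻¹ * g) = 1 := by
      refine hker _ fun M hM => ?_
      ext m
      have h4 : M.ρ g m = M.ρ g' m := by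
        rw [← sub_eq_zero]
        refine hdual _ fun l => ?_
        rw [map_sub, sub_eq_zero]
        exact hgg (fun x => l (M.ρ x m)) ⟨M, hfin M hM, hall M hM, l, m, fun _ => rfl⟩
      rw [map_mul, Module.End.mul_apply, h4]
      simp
    have h5 : σ g = σ g' := by
      have := congrArg (σ g' * ·) h3
      simpa [← map_mul] using this
    rw [h5]
  obtain ⟨M, hM, hMX, l, m, h⟩ := h2
  exact xc_of_matrixCoefficient hirr hMX f a l m hf h

end Steinberg

/-! ### The classes `F` and `pdef X` -/

section Classes

variable {X : GrpB → Prop}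

theorem IsMinimalNormalSubgroup.isChiefFactor {G : Type} [Group G] {A : Subgroup G}
    (h : IsMinimalNormalSubgroup G A) : IsChiefFactor G A ⊥ :=
  ⟨h.1, inferInstance, bot_lt_iff_ne_bot.2 h.2.1, fun N hN _ hNA => h.2.2 N hN hNA⟩

theorem IsMinimalNormalSubgroup.inf_eq_bot {G : Type} [Group G] {K N M : Subgroup G}
    (hK : IsMinimalNormalSubgroup G K) (hN : N.Normal) (hNM : N ≤ M) (hKM : ¬ K ≤ M) :
    N ⊓ K = ⊥ := by
  have := hK.1
  refine (hK.2.2 (N ⊓ K) inferInstance inf_le_right).resolve_right fun h => hKM ?_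
  rw [← h]
  exact inf_le_left.trans hNM

theorem le_centralizer_of_inf_eq_bot {G : Type} [Group G] {K N : Subgroup G} (hK : K.Normal)
    (hN : N.Normal) (h : N ⊓ K = ⊥) : N ≤ Subgroup.centralizer (K : Set G) := by
  intro n hn
  rw [Subgroup.mem_centralizer_iff]
  intro k hk
  exact (Subgroup.commute_of_normal_of_disjoint N K hN hK (disjoint_iff.2 h) n k hn hk).symm

/-- A minimal normal subgroup `A` of a group in `pdef X` is `X`-central if all chief factors above
it are. If `A` avoids a maximal subgroup, its split extension is a quotient of `G`; otherwise it is
a composition factor of a direct sum of tensor products of chief factors above it. -/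
theorem isXCentral_bot_of_above (hXsub : SubtensorClosed X) {G : GrpB} (hG : PdefClass X G)
    {A : Subgroup G.carrier} (hA : IsChiefFactor G.carrier A ⊥)
    (habove : ∀ C D, IsChiefFactor G.carrier C D → A ≤ D → IsXCentral X G.carrier C D) :
    IsXCentral X G.carrier A ⊥ := by
  have := hG.1
  have : Group.IsSolvable G.carrier := hG.2.1
  obtain ⟨p, hp, M, φ, hφ⟩ := exists_chiefFactorMap hA
  have : Fact p.Prime := ⟨hp⟩
  refine isXCentral_of_xc hp hφ ?_
  by_cases hFr : ∀ N : Subgroup G.carrier, IsCoatom N → A ≤ N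
  · refine xc_of_faithful hXsub
      (fun V => ∃ (C D : Subgroup G.carrier) (ψ : C → V.V), IsChiefFactorMap p C D V.ρ ψ ∧ A ≤ D)
      ?_ ?_ ?_ ?_ hφ.irreducible ?_
    · rintro V ⟨C, D, ψ, hψ, -⟩
      have : Finite V.V := Finite.of_surjective ψ hψ.2.2.1
      exact Module.Finite.of_finite
    · rintro V ⟨C, D, ψ, hψ, -⟩
      exact hψ.irreducible.1
    · rintro V ⟨C, D, ψ, hψ, hAD⟩
      exact AllXC.of_irreducible hψ.irreducible ((habove C D hψ.1 hAD).xc hp hψ)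
    · obtain ⟨C, D, V, ψ, hψ, hAD⟩ := hφ.exists_chiefFactor_of_frattini hp hFr
      exact ⟨V, C, D, ψ, hψ, hAD⟩
    · intro g hg
      exact hφ.act_trivial_of_frattini hp hFr
        fun C D V ψ hψ hAD => hg V ⟨C, D, ψ, hψ, hAD⟩
  · push Not at hFr
    obtain ⟨N, hN, hAN⟩ := hFr
    obtain ⟨H, hH⟩ := exists_splitExtension M.ρ
    obtain ⟨f, hf, -⟩ := exists_hom_splitExtension hφ hN hAN hH
    exact ⟨H, hG.2.2 H f hf (splitExtension_primitive hφ.irreducible hH), hH⟩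

theorem PdefClass.quotient {G H : GrpB} (hG : PdefClass X G) (f : G.carrier →* H.carrier)
    (hf : Surjective f) : PdefClass X H := by
  have := hG.1
  have : Group.IsSolvable G.carrier := hG.2.1
  exact ⟨Finite.of_surjective f hf, Group.isSolvable_of_surjective hf,
    fun K π hπ hK => hG.2.2 K (π.comp f) (hπ.comp hf) hK⟩

/-- The inclusion `pdef X ⊆ F`, by induction on the order of the group. -/
theorem fClass_of_pdefClass (hXsub : SubtensorClosed X) (G : GrpB) (hG : PdefClass X G) :
    FClass X G := by
  induction hn : Nat.card G.carrier using Nat.strong_induction_on generalizing G with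
  | _ n ih =>
  subst hn
  have := hG.1
  have : Group.IsSolvable G.carrier := hG.2.1
  -- chief factors above a nontrivial normal subgroup are chief factors of a smaller group
  have hq : ∀ N : Subgroup G.carrier, N.Normal → N ≠ ⊥ → ∀ C D, IsChiefFactor G.carrier C D →
      N ≤ D → IsXCentral X G.carrier C D := by
    intro N hN hN0 C D hCD hND
    let H : GrpB := ⟨G.carrier ⧸ N⟩
    let f : G.carrier →* H.carrier := QuotientGroup.mk' N
    have hf : Surjective f := QuotientGroup.mk'_surjective N
    have hker : f.ker = N := QuotientGroup.ker_mk' N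
    have hcard : Nat.card H.carrier < Nat.card G.carrier := by
      have h1 := Subgroup.card_eq_card_quotient_mul_card_subgroup N
      have h2 : 1 < Nat.card N := (Subgroup.one_lt_card_iff_ne_bot N).2 hN0
      have h3 : 0 < Nat.card (G.carrier ⧸ N) := Nat.card_pos
      change Nat.card (G.carrier ⧸ N) < _
      nlinarith
    exact (fClass_iff_of_surjective f hf).1 (ih _ hcard H (hG.quotient f hf) rfl) C D hCD
      (hker.trans_le hND)
  refine ⟨hG.1, hG.2.1, fun A B hAB => ?_⟩
  by_cases hB : B = ⊥
  · subst hB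
    exact isXCentral_bot_of_above hXsub hG hAB
      fun C D hCD hAD => hq A hAB.1 (bot_lt_iff_ne_bot.1 hAB.2.2.1) C D hCD hAD
  · exact hq B hAB.2.1 hB A B hAB le_rfl

/-- The socle of a primitive finite soluble group is complemented; equivalently, it avoids some
maximal subgroup. Otherwise the next chief factor above the socle would centralize it. -/
theorem exists_coatom_of_primitive {G : Type} [Group G] [Finite G] [Group.IsSolvable G]
    {K : Subgroup G} (hK : IsMinimalNormalSubgroup G K)
    (hC : Subgroup.centralizer (K : Set G) = K) : ∃ M : Subgroup G, IsCoatom M ∧ ¬ K ≤ M := by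
  by_contra hno
  push Not at hno
  have hKn := hK.1
  obtain ⟨p, hp, V, φ, hφ⟩ := exists_chiefFactorMap hK.isChiefFactor
  have hKtop : K < ⊤ := by
    rw [lt_top_iff_ne_top]
    rintro rfl
    rcases eq_top_or_exists_le_coatom (⊥ : Subgroup G) with h | ⟨M, hM, -⟩
    · exact hK.2.1 h.symm
    · exact hM.1 (top_le_iff.1 (hno M hM))
  obtain ⟨L, hL, -⟩ := exists_chiefFactor_above hKn inferInstance hKtop
  have hLn := hL.1
  obtain ⟨q, hq, W, ψ, hψ⟩ := exists_chiefFactorMap hL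
  have htriv : ∀ t ∈ L, ∀ v, V.ρ t v = v := by
    by_cases hpq : q = p
    · subst hpq
      have : Finite V.V := Finite.of_surjective φ hφ.2.2.1
      intro t ht v
      rw [hφ.irreducible.act_trivial_of_pGroup hq hLn (fun r hr => ⟨1, ?_⟩) t ht]
      · rfl
      ext v
      rw [pow_one]
      refine (hφ.act_trivial_iff _).2 (fun a ha => ?_) v
      exact hφ.comm (hψ.pow_mem r hr) ha
    · refine hφ.act_trivial_of_coprime hp hno hLn hL.2.2.1.le fun x hx => ⟨q, ?_, hψ.pow_mem x hx⟩
      exact (Nat.coprime_primes hq hp).2 hpq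
  refine hL.2.2.1.not_ge ?_
  rw [← hC]
  intro t ht
  rw [hC, ← hC, Subgroup.mem_centralizer_iff]
  intro a ha
  exact ((hφ.act_trivial_iff t).1 (htriv t ht) a ha).symm

/-- The inclusion `F ⊆ pdef X`: a primitive quotient is the split extension of its socle. -/
theorem pdefClass_of_fClass (hXiso : IsoClosed X) (G : GrpB) (hG : FClass X G) :
    PdefClass X G := by
  have := hG.1
  have : Group.IsSolvable G.carrier := hG.2.1
  refine ⟨hG.1, hG.2.1, ?_⟩
  rintro H π hπ ⟨K, hK, hC⟩
  have : Finite H.carrier := Finite.of_surjective π hπ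
  have : Group.IsSolvable H.carrier := Group.isSolvable_of_surjective hπ
  have hFH : FClass X H := (fClass_iff_of_surjective π hπ).2 fun A B h _ => hG.2.2 A B h
  obtain ⟨M, hM, hKM⟩ := exists_coatom_of_primitive hK hC
  obtain ⟨p, hp, V, φ, hφ⟩ := exists_chiefFactorMap hK.isChiefFactor
  obtain ⟨P, hP, hPs⟩ := (hFH.2.2 K ⊥ hK.isChiefFactor).xc hp hφ
  obtain ⟨f, hf, hfker⟩ := exists_hom_splitExtension hφ hM hKM hPs
  have hbot : f.ker = ⊥ := by
    rw [← hK.inf_eq_bot (N := f.ker) inferInstance (fun g hg => (hfker g hg).1) hKM, eq_comm,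
      inf_eq_left, ← hC]
    intro g hg
    rw [Subgroup.mem_centralizer_iff]
    exact fun a ha => ((hfker g hg).2 a ha).symm
  exact hXiso P H hP ⟨(MulEquiv.ofBijective f ⟨(MonoidHom.ker_eq_bot_iff f).1 hbot, hf⟩).symm⟩

/-- If all chief factors above `N` are `X`-central, so are all chief factors `A/B` with
`A ⊓ N ≤ B`: such a factor is isomorphic to `AN/BN`. -/
theorem isXCentral_of_inf_le {G : Type} [Group G] [Finite G] [Group.IsSolvable G]
    {A B N : Subgroup G} (hN : N.Normal)
    (hNX : ∀ C D, IsChiefFactor G C D → N ≤ D → IsXCentral X G C D)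
    (h : IsChiefFactor G A B) (hAN : A ⊓ N ≤ B) : IsXCentral X G A B := by
  have hA := h.1
  have hB := h.2.1
  have h1 : A ⊓ (B ⊔ N) = B := by
    refine le_antisymm ?_ (le_inf h.2.2.1.le le_sup_left)
    rintro x ⟨hxA, hx⟩
    obtain ⟨b, hb, n, hn, rfl⟩ := Subgroup.mem_sup_of_normal_right.1 hx
    exact B.mul_mem hb (hAN ⟨(A.mul_mem_cancel_left (h.2.2.1.le hb)).1 hxA, hn⟩)
  have h2 : IsChiefFactor G (A ⊔ (B ⊔ N)) (B ⊔ N) :=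
    IsChiefFactor.of_inf (C := A) (by rwa [h1]) inferInstance rfl
  rw [← h1]
  exact (isXCentral_inf_iff h2 hA rfl).2 (hNX _ _ h2 le_sup_right)

/-- Chief factors above `N ⊓ M` are isomorphic to chief factors above `N` or above `M`. -/
theorem isFormation_fClass : IsFormation (FClass X) := by
  constructor
  · intro G hfin hsol hG H π hπ
    have : Group.IsSolvable G.carrier := hsol
    exact (fClass_iff_of_surjective π hπ).2 fun A B h _ => hG.2.2 A B h
  · rintro G hfin hsol N M hN hM ⟨H₁, f₁, hf₁, hker₁, hH₁⟩ ⟨H₂, f₂, hf₂, hker₂, hH₂⟩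
    have : Group.IsSolvable G.carrier := hsol
    have h₁ := (fClass_iff_of_surjective f₁ hf₁).1 hH₁
    have h₂ := (fClass_iff_of_surjective f₂ hf₂).1 hH₂
    rw [hker₁] at h₁
    rw [hker₂] at h₂
    let H : GrpB := ⟨G.carrier ⧸ (N ⊓ M)⟩
    let f : G.carrier →* H.carrier := QuotientGroup.mk' (N ⊓ M)
    have hf : Surjective f := QuotientGroup.mk'_surjective _
    have hker : f.ker = N ⊓ M := QuotientGroup.ker_mk' _
    refine ⟨H, f, hf, hker, (fClass_iff_of_surjective f hf).2 fun A B h hB => ?_⟩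
    rw [hker] at hB
    by_cases hAN : A ⊓ N ≤ B
    · exact isXCentral_of_inf_le hN h₁ h hAN
    -- otherwise `A/B` is isomorphic to a chief factor below `A ⊓ N`, which survives modulo `M`
    · have hA := h.1
      have hBn := h.2.1
      have hsup : (A ⊓ N) ⊔ B = A :=
        (h.2.2.2 ((A ⊓ N) ⊔ B) inferInstance le_sup_right
          (sup_le inf_le_left h.2.2.1.le)).resolve_left fun he => hAN (he ▸ le_sup_left)
      have hC : (A ⊓ N).Normal := inferInstance
      refine (isXCentral_inf_iff h hC hsup).1
        (isXCentral_of_inf_le hM h₂ (h.inf hC hsup) (le_inf inf_le_left ?_))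
      exact (inf_le_inf_right M inf_le_right).trans hB

/-- A primitive quotient map kills every normal subgroup contained in all maximal subgroups, as the
socle of the quotient avoids a maximal subgroup. -/
theorem isSaturated_pdefClass : IsSaturated (PdefClass X) := by
  rintro G hfin hsol A hA hFr ⟨Q, f, hf, hker, hQ⟩
  have : Group.IsSolvable G.carrier := hsol
  refine ⟨hfin, hsol, ?_⟩
  rintro H π hπ ⟨K, hK, hC⟩
  have : Finite H.carrier := Finite.of_surjective π hπ
  have : Group.IsSolvable H.carrier := Group.isSolvable_of_surjective hπ
  obtain ⟨M, hM, hKM⟩ := exists_coatom_of_primitive hK hC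
  have hAn : (A.map π).Normal := hA.map π hπ
  have hMc : IsCoatom (M.comap π) :=
    Subgroup.isCoatom_comap_of_surjective hπ hM
  have hAM : A.map π ≤ M := Subgroup.map_le_iff_le_comap.2 fun x hx => hFr x hx _ hMc
  have h1 := hK.inf_eq_bot hAn hAM hKM
  have h2 : A.map π ≤ K := hC ▸ le_centralizer_of_inf_eq_bot hK.1 hAn h1
  rw [inf_eq_left.2 h2] at h1
  have h3 : f.ker ≤ π.ker := by
    rw [hker]
    intro x hx
    rw [MonoidHom.mem_ker, ← Subgroup.mem_bot, ← h1]
    exact Subgroup.mem_map_of_mem π hx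
  obtain ⟨g, hg⟩ : ∃ g : Q.carrier →* H.carrier, g.comp f = π :=
    ⟨f.liftOfSurjective hf ⟨π, h3⟩, MonoidHom.liftOfRightInverse_comp f _ _ ⟨π, h3⟩⟩
  refine hQ.2.2 H g (fun h => ?_) ⟨K, hK, hC⟩
  obtain ⟨x, rfl⟩ := hπ h
  exact ⟨f x, by rw [← hg]; rfl⟩

end Classes

/-- Barnes, Lemma 3.8 for groups. Let `X` be a class of primitive finite
soluble groups, closed under isomorphism, which is chief factor closed, dual closed and
subtensor closed. Let `F` be the class of all finite soluble groups all of whose chief factors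
are `X`-central. Then `F` is a saturated formation and `F = pdef X`. -/
theorem saturated_formation_of_chiefFactorClosed
    (X : GrpB → Prop)
    (hXprim : IsPrimitiveClass X)
    (hXiso : IsoClosed X)
    (hXcf : ChiefFactorClosed X)
    (hXdual : DualClosed X)
    (hXsub : SubtensorClosed X) :
    IsSaturatedFormation (FClass X) ∧ ∀ G : GrpB, FClass X G ↔ PdefClass X G := by
  have heq : ∀ G : GrpB, FClass X G ↔ PdefClass X G := fun G =>
    ⟨pdefClass_of_fClass hXiso G, fClass_of_pdefClass hXsub G⟩
  have heq' : FClass X = PdefClass X := funext fun G => propext (heq G)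
  exact ⟨⟨isFormation_fClass, heq' ▸ isSaturated_pdefClass⟩, heq⟩
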